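/- arXiv:2310.02134 — 5 statements merged into one kernel-verified Lean document; each statement's English description precedes it below -/
import Mathlib

section
/- Let h ∈ (0,1) and α ∈ (0,2). Let v̲, v̄ : [0,1] × ℝ^d → ℝ be bounded continuous functions and let h₁, h₂ : [h,1] × ℝ^d → ℝ be bounded continuous functions. Assume that for every (t,x) ∈ [h,1] × ℝ^d one has v̲(t,x) − sup_{k∈Λ} ∫_{ℝ^d} v̲(t−h, x + h^{1/α} z) dμ_k(z) ≤ h · h₁(t,x) and v̄(t,x) − sup_{k∈Λ} ∫_{ℝ^d} v̄(t−h, x + h^{1/α} z) dμ_k(z) ≥ h · h₂(t,x). Then for every (t,x) ∈ [0,1] × ℝ^d, v̲(t,x) − v̄(t,x) ≤ sup_{(s,y) ∈ [0,h) × ℝ^d} max(v̲(s,y) − v̄(s,y), 0) + t · sup_{(s,y) ∈ [h,1] × ℝ^d} max(h₁(s,y) − h₂(s,y), 0). -/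
open MeasureTheory Set

/-!
Let `A` bound `v₁ - v₂` on the initial strip `[0, h)` and let `B ≥ 0` bound `h₁ - h₂`. Monotonicity
and translation invariance of the sublinear expectation turn the bound `v₁ - v₂ ≤ A + (t - h) B` at
time `t - h` into `v₁ - v₂ ≤ A + (t - h) B + h (h₁ - h₂) ≤ A + t B` at time `t`, and every time is
reached from the initial strip after finitely many steps of length `h`.
-/

section Comparison

variable {X Z Λ : Type*} {h T : ℝ}

theorem le_iSup_max_zero {ι : Type*} {f : ι → ℝ} {C : ℝ} (hf : ∀ i, f i ≤ C) (i : ι) :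
    f i ≤ ⨆ j, max (f j) 0 := by
  have hbdd : BddAbove (range fun j => max (f j) 0) :=
    ⟨max C 0, forall_mem_range.2 fun j => max_le_max_right 0 (hf j)⟩
  exact (le_max_left _ _).trans (le_ciSup hbdd i)

theorem exists_forall_sub_le_of_exists_abs_le {ι : Type*} {s : Set ι} {f g : ι → X → ℝ}
    (hf : ∃ M, ∀ t ∈ s, ∀ x, |f t x| ≤ M) (hg : ∃ M, ∀ t ∈ s, ∀ x, |g t x| ≤ M) :
    ∃ C, ∀ t ∈ s, ∀ x, f t x - g t x ≤ C := by
  obtain ⟨M, hM⟩ := hf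
  obtain ⟨N, hN⟩ := hg
  exact ⟨M + N, fun t ht x => by
    linarith [le_of_abs_le (hM t ht x), neg_le_of_abs_le (hN t ht x)]⟩

theorem measurable_slice_of_continuousOn {Y : Type*} [TopologicalSpace Y] [TopologicalSpace X]
    [MeasurableSpace X] [OpensMeasurableSpace X] {s : Set Y} {v : Y → X → ℝ}
    (hv : ContinuousOn (fun q : Y × X => v q.1 q.2) (s ×ˢ univ)) :
    ∀ t ∈ s, Measurable (v t) :=
  fun t ht => (continuousOn_univ.1 (hv.uncurry_left t ht)).measurable

theorem forall_mem_Icc_of_step (hh : 0 < h) {P : ℝ → Prop} (initial : ∀ t ∈ Ico 0 h, P t)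
    (step : ∀ t ∈ Icc h T, P (t - h) → P t) : ∀ t ∈ Icc 0 T, P t := by
  have before_step (n : ℕ) : ∀ t ∈ Icc 0 T, t < n * h → P t := by
    induction n with
    | zero => exact fun t ht hlt => absurd hlt (by simpa using ht.1)
    | succ n ih =>
      intro t ht hlt
      rcases lt_or_ge t h with hth | hth
      · exact initial t ⟨ht.1, hth⟩
      · push_cast at hlt
        exact step t ⟨hth, ht.2⟩
          (ih (t - h) ⟨by linarith, by linarith [ht.2]⟩ (by linarith))
  intro t ht
  obtain ⟨n, hn⟩ := exists_nat_gt (t / h)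
  exact before_step n t ht ((div_lt_iff₀ hh).1 hn)

theorem sub_le_add_mul_of_monotone_scheme (hh : 0 < h) {S : (X → ℝ) → X → ℝ}
    {v₁ v₂ h₁ h₂ : ℝ → X → ℝ} {A B : ℝ} (hB : 0 ≤ B)
    (hS : ∀ t ∈ Icc h T, ∀ c, (∀ y, v₁ (t - h) y ≤ v₂ (t - h) y + c) →
      ∀ x, S (v₁ (t - h)) x ≤ S (v₂ (t - h)) x + c)
    (hsub : ∀ t ∈ Icc h T, ∀ x, v₁ t x - S (v₁ (t - h)) x ≤ h * h₁ t x)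
    (hsuper : ∀ t ∈ Icc h T, ∀ x, h * h₂ t x ≤ v₂ t x - S (v₂ (t - h)) x)
    (initial : ∀ t ∈ Ico 0 h, ∀ x, v₁ t x - v₂ t x ≤ A)
    (source : ∀ t ∈ Icc h T, ∀ x, h₁ t x - h₂ t x ≤ B) :
    ∀ t ∈ Icc 0 T, ∀ x, v₁ t x - v₂ t x ≤ A + t * B := by
  refine forall_mem_Icc_of_step hh (fun t ht x => ?_) (fun t ht ih x => ?_)
  · exact (initial t ht x).trans (le_add_of_nonneg_right (mul_nonneg ht.1 hB))
  · have scheme_le : S (v₁ (t - h)) x ≤ S (v₂ (t - h)) x + (A + (t - h) * B) :=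
      hS t ht _ (fun y => sub_le_iff_le_add'.1 (ih y)) x
    calc v₁ t x - v₂ t x
        ≤ (A + (t - h) * B) + h * (h₁ t x - h₂ t x) := by
          linarith [hsub t ht x, hsuper t ht x]
      _ ≤ (A + (t - h) * B) + h * B := by gcongr; exact source t ht x
      _ = A + t * B := by ring

section UpperExpectation

variable [MeasurableSpace Z] {μ : Λ → Measure Z} {f g : Z → ℝ}

/-- The sublinear expectation `Ê[f] = sup_k ∫ f dμ_k` of a family of measures. It is a real-valued
supremum, meaningful only when every `∫ f dμ_k` exists and these integrals are bounded above. -/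
noncomputable def upperExpectation (μ : Λ → Measure Z) (f : Z → ℝ) : ℝ :=
  ⨆ k, ∫ z, f z ∂μ k

variable [∀ k, IsProbabilityMeasure (μ k)]

theorem bddAbove_range_integral_of_abs_le {M : ℝ} (hf : ∀ z, |f z| ≤ M) :
    BddAbove (range fun k => ∫ z, f z ∂μ k) := by
  refine ⟨M, forall_mem_range.2 fun k => (le_abs_self _).trans ?_⟩
  simpa using norm_integral_le_of_norm_le_const (μ := μ k) (f := f) (.of_forall hf)

theorem upperExpectation_le_add_const [Nonempty Λ] {c : ℝ} (hf : ∀ k, Integrable f (μ k))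
    (hg : ∀ k, Integrable g (μ k)) (hbdd : BddAbove (range fun k => ∫ z, g z ∂μ k))
    (hfg : ∀ z, f z ≤ g z + c) : upperExpectation μ f ≤ upperExpectation μ g + c := by
  refine ciSup_le fun k => ?_
  calc ∫ z, f z ∂μ k
      ≤ ∫ z, (g z + c) ∂μ k := integral_mono (hf k) ((hg k).add (integrable_const c)) hfg
    _ = ∫ z, g z ∂μ k + c := by simp [integral_add (hg k) (integrable_const c)]
    _ ≤ upperExpectation μ g + c := by gcongr; exact le_ciSup hbdd k

end UpperExpectation

theorem stmt_0_general [MeasurableSpace X] [MeasurableSpace Z] [Nonempty Λ]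
    {μ : Λ → Measure Z} [∀ k, IsProbabilityMeasure (μ k)] (hh : 0 < h) (hhT : h ≤ T)
    {φ : X → Z → X} (hφ : ∀ x, Measurable (φ x)) {v₁ v₂ h₁ h₂ : ℝ → X → ℝ}
    (hv₁m : ∀ t ∈ Icc 0 T, Measurable (v₁ t)) (hv₂m : ∀ t ∈ Icc 0 T, Measurable (v₂ t))
    (hv₁b : ∃ M, ∀ t ∈ Icc 0 T, ∀ x, |v₁ t x| ≤ M)
    (hv₂b : ∃ M, ∀ t ∈ Icc 0 T, ∀ x, |v₂ t x| ≤ M)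
    (hsource : ∃ C, ∀ t ∈ Icc h T, ∀ x, h₁ t x - h₂ t x ≤ C)
    (hsub : ∀ t ∈ Icc h T, ∀ x,
      v₁ t x - upperExpectation μ (fun z => v₁ (t - h) (φ x z)) ≤ h * h₁ t x)
    (hsuper : ∀ t ∈ Icc h T, ∀ x,
      h * h₂ t x ≤ v₂ t x - upperExpectation μ (fun z => v₂ (t - h) (φ x z))) :
    ∀ t ∈ Icc 0 T, ∀ x,
      v₁ t x - v₂ t x ≤
        (⨆ q : {q : ℝ × X // 0 ≤ q.1 ∧ q.1 < h}, max (v₁ q.1.1 q.1.2 - v₂ q.1.1 q.1.2) 0) +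
        t * ⨆ q : {q : ℝ × X // h ≤ q.1 ∧ q.1 ≤ T},
          max (h₁ q.1.1 q.1.2 - h₂ q.1.1 q.1.2) 0 := by
  obtain ⟨D, hD⟩ := exists_forall_sub_le_of_exists_abs_le hv₁b hv₂b
  obtain ⟨M₁, hM₁⟩ := hv₁b
  obtain ⟨M₂, hM₂⟩ := hv₂b
  obtain ⟨C, hC⟩ := hsource
  refine sub_le_add_mul_of_monotone_scheme hh
    (S := fun u x => upperExpectation μ fun z => u (φ x z))
    (Real.iSup_nonneg fun _ => le_max_right _ _) ?_ hsub hsuper ?_ ?_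
  · intro t ht c hle x
    have hs : t - h ∈ Icc 0 T := ⟨by linarith [ht.1], by linarith [ht.2]⟩
    have integrable_of_bound {u : X → ℝ} {M : ℝ} (hu : Measurable u) (hM : ∀ y, |u y| ≤ M)
        (k : Λ) : Integrable (fun z => u (φ x z)) (μ k) :=
      .of_bound (hu.comp (hφ x)).aestronglyMeasurable M (.of_forall fun _ => hM _)
    exact upperExpectation_le_add_const (integrable_of_bound (hv₁m _ hs) (hM₁ _ hs))
      (integrable_of_bound (hv₂m _ hs) (hM₂ _ hs))
      (bddAbove_range_integral_of_abs_le fun _ => hM₂ _ hs _) fun _ => hle _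
  · intro t ht x
    exact le_iSup_max_zero (ι := {q : ℝ × X // 0 ≤ q.1 ∧ q.1 < h})
      (fun q => hD q.1.1 ⟨q.2.1, q.2.2.le.trans hhT⟩ q.1.2) ⟨(t, x), ht⟩
  · intro t ht x
    exact le_iSup_max_zero (ι := {q : ℝ × X // h ≤ q.1 ∧ q.1 ≤ T})
      (fun q => hC q.1.1 q.2 q.1.2) ⟨(t, x), ht⟩

end Comparison

/-- Comparison principle for the discrete approximation scheme (Lemma 3.4 /
`comparison` in the paper). -/
theorem stmt_0 {d : ℕ} (hd : 1 ≤ d) {Λ : Type*} [Nonempty Λ]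
    (μ : Λ → Measure (EuclideanSpace ℝ (Fin d)))
    (hμ : ∀ k, IsProbabilityMeasure (μ k))
    (h α : ℝ) (hh : h ∈ Set.Ioo (0:ℝ) 1) (hα : α ∈ Set.Ioo (0:ℝ) 2)
    (v₁ v₂ h₁ h₂ : ℝ → EuclideanSpace ℝ (Fin d) → ℝ)
    (hv₁c : ContinuousOn (fun q : ℝ × EuclideanSpace ℝ (Fin d) => v₁ q.1 q.2)
      (Set.Icc 0 1 ×ˢ Set.univ))
    (hv₂c : ContinuousOn (fun q : ℝ × EuclideanSpace ℝ (Fin d) => v₂ q.1 q.2)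
      (Set.Icc 0 1 ×ˢ Set.univ))
    (hv₁b : ∃ M, ∀ t ∈ Set.Icc (0:ℝ) 1, ∀ x, |v₁ t x| ≤ M)
    (hv₂b : ∃ M, ∀ t ∈ Set.Icc (0:ℝ) 1, ∀ x, |v₂ t x| ≤ M)
    (hh₁c : ContinuousOn (fun q : ℝ × EuclideanSpace ℝ (Fin d) => h₁ q.1 q.2)
      (Set.Icc h 1 ×ˢ Set.univ))
    (hh₂c : ContinuousOn (fun q : ℝ × EuclideanSpace ℝ (Fin d) => h₂ q.1 q.2)
      (Set.Icc h 1 ×ˢ Set.univ))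
    (hh₁b : ∃ M, ∀ t ∈ Set.Icc h 1, ∀ x, |h₁ t x| ≤ M)
    (hh₂b : ∃ M, ∀ t ∈ Set.Icc h 1, ∀ x, |h₂ t x| ≤ M)
    (hyp₁ : ∀ t ∈ Set.Icc h 1, ∀ x,
      v₁ t x - (⨆ k, ∫ z, v₁ (t - h) (x + h ^ (1/α) • z) ∂(μ k)) ≤ h * h₁ t x)
    (hyp₂ : ∀ t ∈ Set.Icc h 1, ∀ x,
      h * h₂ t x ≤ v₂ t x - ⨆ k, ∫ z, v₂ (t - h) (x + h ^ (1/α) • z) ∂(μ k)) :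
    ∀ t ∈ Set.Icc (0:ℝ) 1, ∀ x,
      v₁ t x - v₂ t x ≤
        (⨆ q : {q : ℝ × EuclideanSpace ℝ (Fin d) // 0 ≤ q.1 ∧ q.1 < h},
          max (v₁ q.1.1 q.1.2 - v₂ q.1.1 q.1.2) 0) +
        t * ⨆ q : {q : ℝ × EuclideanSpace ℝ (Fin d) // h ≤ q.1 ∧ q.1 ≤ 1},
          max (h₁ q.1.1 q.1.2 - h₂ q.1.1 q.1.2) 0 := by
  exact stmt_0_general hh.1 hh.2.le (φ := fun x z => x + h ^ (1 / α) • z) (fun x => by fun_prop)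
    (measurable_slice_of_continuousOn hv₁c) (measurable_slice_of_continuousOn hv₂c) hv₁b hv₂b
    (exists_forall_sub_le_of_exists_abs_le hh₁b hh₂b) hyp₁ hyp₂
end

section
/- Let δ ∈ (0,1] with δ < α if α ≤ 1 (for α ∈ (1,2) one may take δ = 1). For a bounded continuous f : ℝ^d → ℝ define T₁f(x) := sup_{k∈Λ} ∫_{ℝ^d} f(x+z) dμ_k(z), and let T₁ⁿ denote its n-fold iterate. Assume there is a constant M_δ ≥ 0 such that for every integer n ≥ 1 and every R > 0, T₁ⁿ[y ↦ min(|y|^δ, R)](0) ≤ M_δ n^{δ/α}. Then for all t, s ∈ [0,1] and every x ∈ ℝ^d, the solution u_h of the discrete approximation scheme satisfies |u_h(t,x) − u_h(s,x)| ≤ C_φ^δ (2‖φ‖_∞)^{1−δ} M_δ (|t−s|^{δ/α} + h^{δ/α}). -/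
open MeasureTheory Set

/-!
Let `T f x = Ê[f (x + ·)]`. In the variable `y`, where the space variable is `x + h ^ (1 / α) • y`,
the scheme at time `t` is the iterate `T ^ ⌊t / h⌋` of `ψ y = φ (x + h ^ (1 / α) • y)`. Since `T` is
a sup-norm contraction, comparing two times reduces to estimating `T ^ j ψ - ψ`. Interpolating
between boundedness and Lipschitz continuity makes `φ` `δ`-Hölder, so `|ψ (y + z) - ψ y|` is at most
a multiple of `min (‖z‖ ^ δ) R` for large `R`; sublinearity carries this pointwise bound through the
`j` iterations, where the moment hypothesis applies.
-/

open scoped NNReal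

section SublinearExpectation

variable {Ω Λ : Type*} [MeasurableSpace Ω]

/-- The sublinear expectation `Ê[f] = sup_k ∫ f dμ_k`. The supremum is taken in `ℝ`, so it is
meaningful only when the integrals are bounded above, as they are for bounded measurable `f`. -/
noncomputable def sublinearExpectation (μ : Λ → Measure Ω) (f : Ω → ℝ) : ℝ :=
  ⨆ k, ∫ z, f z ∂(μ k)

/-- Bounded measurable real functions, the domain of a sublinear expectation. -/
structure BddMeasurable (f : Ω → ℝ) : Prop where
  measurable : Measurable f
  bounded : ∃ B, ∀ z, |f z| ≤ B

variable {μ : Λ → Measure Ω} {f g w : Ω → ℝ}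

theorem BddMeasurable.add (hf : BddMeasurable f) (hg : BddMeasurable g) :
    BddMeasurable fun z => f z + g z := by
  obtain ⟨B, hB⟩ := hf.bounded
  obtain ⟨B', hB'⟩ := hg.bounded
  exact ⟨hf.measurable.add hg.measurable,
    B + B', fun z => (abs_add_le _ _).trans (add_le_add (hB z) (hB' z))⟩

theorem sublinearExpectation_const_mul {a : ℝ} (ha : 0 ≤ a) (f : Ω → ℝ) :
    sublinearExpectation μ (fun z => a * f z) = a * sublinearExpectation μ f := by
  simp only [sublinearExpectation, integral_const_mul, Real.mul_iSup_of_nonneg ha]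

variable [∀ k, IsProbabilityMeasure (μ k)]

theorem BddMeasurable.integrable (hf : BddMeasurable f) (k : Λ) : Integrable f (μ k) := by
  obtain ⟨B, hB⟩ := hf.bounded
  exact .of_bound hf.measurable.aestronglyMeasurable B (ae_of_all _ hB)

theorem BddMeasurable.bddAbove_range_integral (hf : BddMeasurable f) :
    BddAbove (range fun k => ∫ z, f z ∂(μ k)) := by
  obtain ⟨B, hB⟩ := hf.bounded
  refine ⟨B, forall_mem_range.2 fun k => (le_abs_self _).trans ?_⟩
  simpa using norm_integral_le_of_norm_le_const (μ := μ k) (f := f) (ae_of_all _ hB)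

theorem sublinearExpectation_mono (hf : BddMeasurable f) (hg : BddMeasurable g)
    (hfg : ∀ z, f z ≤ g z) : sublinearExpectation μ f ≤ sublinearExpectation μ g :=
  ciSup_mono hg.bddAbove_range_integral fun k =>
    integral_mono (hf.integrable k) (hg.integrable k) hfg

variable [Nonempty Λ]

theorem sublinearExpectation_const (a : ℝ) : sublinearExpectation μ (fun _ => a) = a := by
  simp [sublinearExpectation]

theorem sublinearExpectation_add_le (hf : BddMeasurable f) (hg : BddMeasurable g) :
    sublinearExpectation μ (fun z => f z + g z) ≤
      sublinearExpectation μ f + sublinearExpectation μ g :=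
  ciSup_le fun k => (integral_add (hf.integrable k) (hg.integrable k)).trans_le <|
    add_le_add (le_ciSup hf.bddAbove_range_integral k) (le_ciSup hg.bddAbove_range_integral k)

theorem abs_sublinearExpectation_sub_le (hf : BddMeasurable f) (hg : BddMeasurable g)
    (hw : BddMeasurable w) (hfg : ∀ z, |f z - g z| ≤ w z) :
    |sublinearExpectation μ f - sublinearExpectation μ g| ≤ sublinearExpectation μ w := by
  rw [abs_sub_le_iff, sub_le_iff_le_add', sub_le_iff_le_add']
  constructor
  · exact (sublinearExpectation_mono hf (hg.add hw) fun z =>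
      sub_le_iff_le_add'.1 (abs_sub_le_iff.1 (hfg z)).1).trans (sublinearExpectation_add_le hg hw)
  · exact (sublinearExpectation_mono hg (hf.add hw) fun z =>
      sub_le_iff_le_add'.1 (abs_sub_le_iff.1 (hfg z)).2).trans (sublinearExpectation_add_le hf hw)

end SublinearExpectation

section Holder

theorem holderWith_of_dist_le {X Y : Type*} [PseudoMetricSpace X] [PseudoMetricSpace Y]
    {f : X → Y} {C r : ℝ≥0} (hf : ∀ x y, dist (f x) (f y) ≤ C * dist x y ^ (r : ℝ)) :
    HolderWith C r f := by
  intro x y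
  rw [edist_nndist, edist_nndist, ← ENNReal.coe_rpow_of_nonneg _ r.coe_nonneg, ← ENNReal.coe_mul,
    ENNReal.coe_le_coe, ← NNReal.coe_le_coe]
  simpa using hf x y

theorem holderWith_of_lipschitzWith_of_norm_le {X Y : Type*} [PseudoMetricSpace X]
    [SeminormedAddCommGroup Y] {f : X → Y} {C B δ : ℝ≥0} (hf : LipschitzWith C f)
    (hB : ∀ x, ‖f x‖ ≤ B) (hδ : δ ≤ 1) :
    HolderWith (C ^ (δ : ℝ) * (2 * B) ^ (1 - δ : ℝ)) δ f := by
  have hosc : HolderWith (2 * B) 0 f := holderWith_of_dist_le fun x y => by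
    simpa [two_mul] using (dist_le_norm_add_norm _ _).trans (add_le_add (hB x) (hB y))
  simpa [NNReal.coe_sub hδ] using
    (holderWith_one.2 hf).interpolate hosc (add_tsub_cancel_of_le hδ)

theorem holderWith_norm_rpow {E : Type*} [SeminormedAddCommGroup E] {δ : ℝ≥0} (hδ : δ ≤ 1) :
    HolderWith 1 δ fun y : E => ‖y‖ ^ (δ : ℝ) := by
  have hle (x y : E) : ‖x‖ ^ (δ : ℝ) ≤ ‖y‖ ^ (δ : ℝ) + dist x y ^ (δ : ℝ) :=
    calc ‖x‖ ^ (δ : ℝ) ≤ (‖y‖ + dist x y) ^ (δ : ℝ) := by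
          gcongr
          rw [dist_eq_norm]
          exact norm_le_norm_add_norm_sub' x y
      _ ≤ ‖y‖ ^ (δ : ℝ) + dist x y ^ (δ : ℝ) :=
          Real.rpow_add_le_add_rpow (norm_nonneg _) dist_nonneg δ.coe_nonneg hδ
  refine holderWith_of_dist_le fun x y => ?_
  rw [NNReal.coe_one, one_mul, Real.dist_eq, abs_sub_le_iff, sub_le_iff_le_add',
    sub_le_iff_le_add']
  exact ⟨hle x y, dist_comm x y ▸ hle y x⟩

theorem holderWith_comp_add_smul {E Y : Type*} [SeminormedAddCommGroup E] [NormedSpace ℝ E]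
    [PseudoEMetricSpace Y] {φ : E → Y} {K δ : ℝ≥0} (hφ : HolderWith K δ φ) (x : E) (c : ℝ) :
    HolderWith (K * ‖c‖₊ ^ (δ : ℝ)) δ fun y => φ (x + c • y) := by
  have hlip : LipschitzWith ‖c‖₊ fun y : E => x + c • y := .of_dist_le_mul fun y z => by
    simp [dist_smul₀]
  simpa [Function.comp_def] using hφ.comp (holderWith_one.2 hlip)

theorem nonneg_of_abs_sub_le_mul_norm_sub {E : Type*} [NormedAddCommGroup E] [Nontrivial E]
    {φ : E → ℝ} {C : ℝ} (hφ : ∀ x y, |φ x - φ y| ≤ C * ‖x - y‖) : 0 ≤ C := by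
  obtain ⟨x, y, hxy⟩ := exists_pair_ne E
  exact nonneg_of_mul_nonneg_left ((abs_nonneg _).trans (hφ x y)) (norm_sub_pos_iff.2 hxy)

end Holder

section BddUniformContinuous

/-- Bounded uniformly continuous real functions. Uniform continuity, unlike continuity, passes to
suprema of integrals over an arbitrary family of measures. -/
structure BddUniformContinuous {X : Type*} [UniformSpace X] (f : X → ℝ) : Prop where
  bounded : ∃ B, ∀ x, |f x| ≤ B
  uniformContinuous : UniformContinuous f

theorem bddUniformContinuous_const {X : Type*} [UniformSpace X] (a : ℝ) :
    BddUniformContinuous fun _ : X => a :=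
  ⟨⟨|a|, fun _ => le_rfl⟩, uniformContinuous_const⟩

theorem BddUniformContinuous.const_mul {X : Type*} [UniformSpace X] {f : X → ℝ}
    (hf : BddUniformContinuous f) (a : ℝ) : BddUniformContinuous fun x => a * f x := by
  obtain ⟨B, hB⟩ := hf.bounded
  refine ⟨⟨|a| * B, fun x => ?_⟩, hf.uniformContinuous.const_mul' a⟩
  rw [abs_mul]
  gcongr
  exact hB x

variable {E : Type*} [SeminormedAddCommGroup E]

theorem BddUniformContinuous.comp_add_left {f : E → ℝ} (hf : BddUniformContinuous f) (x : E) :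
    BddUniformContinuous fun z => f (x + z) :=
  ⟨hf.bounded.imp fun _ hB z => hB (x + z),
    hf.uniformContinuous.comp (uniformContinuous_const.add uniformContinuous_id)⟩

theorem BddUniformContinuous.bddMeasurable [MeasurableSpace E] [OpensMeasurableSpace E]
    {f : E → ℝ} (hf : BddUniformContinuous f) : BddMeasurable f :=
  ⟨hf.uniformContinuous.continuous.measurable, hf.bounded⟩

theorem bddUniformContinuous_min_norm_rpow {δ : ℝ≥0} (hδ0 : 0 < δ) (hδ1 : δ ≤ 1) {R : ℝ}
    (hR : 0 ≤ R) : BddUniformContinuous fun y : E => min (‖y‖ ^ (δ : ℝ)) R where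
  bounded := ⟨R, fun y => by
    rw [abs_of_nonneg (by positivity)]
    exact min_le_right _ _⟩
  uniformContinuous := lipschitzWith_min.uniformContinuous.comp
    (((holderWith_norm_rpow hδ1).uniformContinuous hδ0).prodMk uniformContinuous_const)

end BddUniformContinuous

section WalkOperator

/-- The one-step operator `T₁ f (x) = Ê[f (x + ·)]` of the random walk under uncertainty `μ`. -/
noncomputable def walkOperator {E Λ : Type*} [Add E] [MeasurableSpace E] (μ : Λ → Measure E)
    (f : E → ℝ) (x : E) : ℝ :=
  sublinearExpectation μ fun z => f (x + z)

theorem iterate_walkOperator_const_mul {E Λ : Type*} [Add E] [MeasurableSpace E]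
    (μ : Λ → Measure E) {a : ℝ} (ha : 0 ≤ a) (f : E → ℝ) (n : ℕ) :
    (walkOperator μ)^[n] (fun x => a * f x) = fun x => a * (walkOperator μ)^[n] f x :=
  Function.Commute.iterate_left (f := walkOperator μ) (g := fun f x => a * f x)
    (fun _ => funext fun _ => sublinearExpectation_const_mul ha _) n f

theorem iterate_walkOperator_comp_add_left {E Λ : Type*} [AddSemigroup E] [MeasurableSpace E]
    (μ : Λ → Measure E) (f : E → ℝ) (x : E) (n : ℕ) :
    (walkOperator μ)^[n] (fun z => f (x + z)) = fun z => (walkOperator μ)^[n] f (x + z) :=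
  Function.Commute.iterate_left (f := walkOperator μ) (g := fun f z => f (x + z))
    (fun _ => funext fun _ => by simp only [walkOperator, add_assoc]) n f

theorem iterate_walkOperator_const {E Λ : Type*} [Add E] [MeasurableSpace E] [Nonempty Λ]
    {μ : Λ → Measure E} [∀ k, IsProbabilityMeasure (μ k)] (a : ℝ) (n : ℕ) :
    (walkOperator μ)^[n] (fun _ => a) = fun _ => a :=
  Function.iterate_fixed (funext fun _ => sublinearExpectation_const a) n

variable {E Λ : Type*} [SeminormedAddCommGroup E] [MeasurableSpace E] [OpensMeasurableSpace E]
  [Nonempty Λ] {μ : Λ → Measure E} [∀ k, IsProbabilityMeasure (μ k)] {f g w : E → ℝ}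

theorem abs_walkOperator_sub_le {x y : E} (hf : BddUniformContinuous f)
    (hg : BddUniformContinuous g) (hw : BddUniformContinuous w)
    (hfg : ∀ z, |f (x + z) - g (y + z)| ≤ w (x + z)) :
    |walkOperator μ f x - walkOperator μ g y| ≤ walkOperator μ w x :=
  abs_sublinearExpectation_sub_le (hf.comp_add_left x).bddMeasurable
    (hg.comp_add_left y).bddMeasurable (hw.comp_add_left x).bddMeasurable hfg

theorem bddUniformContinuous_walkOperator (hf : BddUniformContinuous f) :
    BddUniformContinuous (walkOperator μ f) := by
  have abs_sub_le {g : E → ℝ} (hg : BddUniformContinuous g) {x y : E} {ε : ℝ}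
      (hfg : ∀ z, |f (x + z) - g (y + z)| ≤ ε) :
      |walkOperator μ f x - walkOperator μ g y| ≤ ε :=
    (abs_walkOperator_sub_le hf hg (bddUniformContinuous_const ε) hfg).trans_eq
      (sublinearExpectation_const ε)
  constructor
  · obtain ⟨B, hB⟩ := hf.bounded
    refine ⟨B, fun x => ?_⟩
    have hzero : walkOperator μ (fun _ => 0) x = 0 := sublinearExpectation_const 0
    have hsub := abs_sub_le (x := x) (y := x) (bddUniformContinuous_const 0) fun z =>
      (congrArg abs (sub_zero _)).trans_le (hB (x + z))
    rwa [hzero, sub_zero] at hsub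
  · refine Metric.uniformContinuous_iff_le.2 fun ε hε => ?_
    obtain ⟨r, hr, hfr⟩ := Metric.uniformContinuous_iff_le.1 hf.uniformContinuous ε hε
    exact ⟨r, hr, fun x y hxy => abs_sub_le hf fun z => hfr (by simpa using hxy)⟩

theorem BddUniformContinuous.iterate_walkOperator (hf : BddUniformContinuous f) (n : ℕ) :
    BddUniformContinuous ((walkOperator μ)^[n] f) := by
  induction n with
  | zero => exact hf
  | succ n ih =>
    rw [Function.iterate_succ_apply']
    exact bddUniformContinuous_walkOperator ih

theorem abs_iterate_walkOperator_sub_le (hf : BddUniformContinuous f)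
    (hg : BddUniformContinuous g) (hw : BddUniformContinuous w)
    (hfg : ∀ x, |f x - g x| ≤ w x) (n : ℕ) (x : E) :
    |(walkOperator μ)^[n] f x - (walkOperator μ)^[n] g x| ≤ (walkOperator μ)^[n] w x := by
  induction n generalizing x with
  | zero => exact hfg x
  | succ n ih =>
    simp only [Function.iterate_succ_apply']
    exact abs_walkOperator_sub_le (hf.iterate_walkOperator n) (hg.iterate_walkOperator n)
      (hw.iterate_walkOperator n) fun z => ih (x + z)

end WalkOperator

section TruncatedMoment

variable {E Λ : Type*} [SeminormedAddCommGroup E] {ψ : E → ℝ} {δ K : ℝ≥0} {B : ℝ}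

theorem exists_abs_sub_le_mul_min_norm_rpow (hB : ∀ y, |ψ y| ≤ B) (hψ : HolderWith K δ ψ) :
    ∃ R > 0, ∀ y z, |ψ (y + z) - ψ y| ≤ K * min (‖z‖ ^ (δ : ℝ)) R := by
  have hB0 : 0 ≤ B := (abs_nonneg _).trans (hB 0)
  refine ⟨2 * B / K + 1, by positivity, fun y z => ?_⟩
  have hhol : |ψ (y + z) - ψ y| ≤ K * ‖z‖ ^ (δ : ℝ) := by
    simpa [Real.dist_eq] using hψ.dist_le (y + z) y
  rw [mul_min_of_nonneg _ _ K.coe_nonneg]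
  refine le_min hhol ?_
  obtain rfl | hK := eq_or_ne K 0
  · simpa using hhol
  · calc |ψ (y + z) - ψ y| ≤ 2 * B :=
          (abs_sub _ _).trans (by linarith [hB (y + z), hB y])
      _ ≤ 2 * B + K := le_add_of_nonneg_right K.coe_nonneg
      _ = K * (2 * B / K + 1) := by field_simp

variable [MeasurableSpace E] [OpensMeasurableSpace E] [Nonempty Λ] {μ : Λ → Measure E}
  [∀ k, IsProbabilityMeasure (μ k)]

theorem abs_iterate_walkOperator_sub_self_le (hδ0 : 0 < δ) (hδ1 : δ ≤ 1) (hB : ∀ y, |ψ y| ≤ B)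
    (hψ : HolderWith K δ ψ) {n : ℕ} {m : ℝ}
    (hm : ∀ R > 0, (walkOperator μ)^[n] (fun y => min (‖y‖ ^ (δ : ℝ)) R) 0 ≤ m) (y : E) :
    |(walkOperator μ)^[n] ψ y - ψ y| ≤ K * m := by
  obtain ⟨R, hR, hψR⟩ := exists_abs_sub_le_mul_min_norm_rpow hB hψ
  have hψc : BddUniformContinuous ψ := ⟨⟨B, hB⟩, hψ.uniformContinuous hδ0⟩
  calc |(walkOperator μ)^[n] ψ y - ψ y|
      = |(walkOperator μ)^[n] (fun z => ψ (y + z)) 0 - (walkOperator μ)^[n] (fun _ => ψ y) 0| := by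
        simp only [iterate_walkOperator_comp_add_left, iterate_walkOperator_const, add_zero]
    _ ≤ (walkOperator μ)^[n] (fun z => K * min (‖z‖ ^ (δ : ℝ)) R) 0 :=
        abs_iterate_walkOperator_sub_le (hψc.comp_add_left y) (bddUniformContinuous_const _)
          ((bddUniformContinuous_min_norm_rpow hδ0 hδ1 hR.le).const_mul _) (hψR y) n 0
    _ = K * (walkOperator μ)^[n] (fun z => min (‖z‖ ^ (δ : ℝ)) R) 0 := by
        rw [iterate_walkOperator_const_mul μ K.coe_nonneg]
    _ ≤ K * m := by
        gcongr
        exact hm R hR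

theorem abs_iterate_add_walkOperator_sub_le (hδ0 : 0 < δ) (hδ1 : δ ≤ 1) (hB : ∀ y, |ψ y| ≤ B)
    (hψ : HolderWith K δ ψ) {n : ℕ} {m : ℝ}
    (hm : ∀ R > 0, (walkOperator μ)^[n] (fun y => min (‖y‖ ^ (δ : ℝ)) R) 0 ≤ m) (i : ℕ) (y : E) :
    |(walkOperator μ)^[i + n] ψ y - (walkOperator μ)^[i] ψ y| ≤ K * m := by
  have hψc : BddUniformContinuous ψ := ⟨⟨B, hB⟩, hψ.uniformContinuous hδ0⟩
  rw [Function.iterate_add_apply]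
  refine (abs_iterate_walkOperator_sub_le (hψc.iterate_walkOperator n) hψc
    (bddUniformContinuous_const (K * m))
    (abs_iterate_walkOperator_sub_self_le hδ0 hδ1 hB hψ hm) i y).trans_eq ?_
  rw [iterate_walkOperator_const]

end TruncatedMoment

section DiscreteScheme

theorem floor_div_sub_floor_div_mul_le {s t h : ℝ} (hh : 0 < h) (ht : 0 ≤ t) :
    ((⌊t / h⌋₊ : ℝ) - ⌊s / h⌋₊) * h ≤ t - s + h := by
  have hfloor_t : ⌊t / h⌋₊ * h ≤ t := (le_div_iff₀ hh).1 (Nat.floor_le (by positivity))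
  have hlt_floor_s : s < (⌊s / h⌋₊ + 1) * h := (div_lt_iff₀ hh).1 (Nat.lt_floor_add_one _)
  linarith

variable {E Λ : Type*} [SeminormedAddCommGroup E] [NormedSpace ℝ E] [MeasurableSpace E]

/-- `u` solves the discrete approximation scheme with time step `h`, space step `c`, and initial
value `φ`; the paper's scheme has `c = h ^ (1 / α)`. -/
structure IsDiscreteScheme (μ : Λ → Measure E) (h c : ℝ) (φ : E → ℝ) (u : ℝ → E → ℝ) : Prop where
  initial : ∀ t, 0 ≤ t → t < h → ∀ x, u t x = φ x
  step : ∀ t, h ≤ t → ∀ x, u t x = ⨆ k, ∫ z, u (t - h) (x + c • z) ∂(μ k)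

variable {μ : Λ → Measure E} {h c : ℝ} {φ : E → ℝ} {u : ℝ → E → ℝ}

theorem IsDiscreteScheme.apply_add_smul (hu : IsDiscreteScheme μ h c φ u) (hh : 0 < h) {n : ℕ}
    {t : ℝ} (ht : 0 ≤ t) (hn : ⌊t / h⌋₊ = n) (x y : E) :
    u t (x + c • y) = (walkOperator μ)^[n] (fun y => φ (x + c • y)) y := by
  induction n generalizing t y with
  | zero => exact hu.initial t ht ((div_lt_one hh).1 (Nat.floor_eq_zero.1 hn)) _
  | succ n ih =>
    have hht : h ≤ t := (one_le_div hh).1 (Nat.floor_pos.1 (hn ▸ n.succ_pos))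
    have hn' : ⌊(t - h) / h⌋₊ = n := by
      rw [sub_div, div_self hh.ne', Nat.floor_sub_one, hn, Nat.add_sub_cancel]
    rw [Function.iterate_succ_apply', hu.step t hht]
    simp only [add_assoc, ← smul_add, ih (sub_nonneg.2 hht) hn']
    rfl

theorem IsDiscreteScheme.apply_eq_iterate (hu : IsDiscreteScheme μ h c φ u) (hh : 0 < h) {t : ℝ}
    (ht : 0 ≤ t) (x : E) :
    u t x = (walkOperator μ)^[⌊t / h⌋₊] (fun y => φ (x + c • y)) 0 := by
  simpa using hu.apply_add_smul hh ht rfl x 0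

variable [OpensMeasurableSpace E] [Nonempty Λ] [∀ k, IsProbabilityMeasure (μ k)]

theorem stmt_2_general {α M B : ℝ} {δ K : ℝ≥0} (hh : 0 < h) (hδ0 : 0 < δ) (hδ1 : δ ≤ 1)
    (hδα : δ ≤ α) (hM : 0 ≤ M) (hB : ∀ x, |φ x| ≤ B) (hφ : HolderWith K δ φ)
    (hmom : ∀ n : ℕ, 1 ≤ n → ∀ R : ℝ, 0 < R →
      (walkOperator μ)^[n] (fun y => min (‖y‖ ^ (δ : ℝ)) R) 0 ≤ M * (n : ℝ) ^ (δ / α))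
    (hu : IsDiscreteScheme μ h (h ^ (1 / α)) φ u) {t s : ℝ} (ht : 0 ≤ t) (hs : 0 ≤ s) (x : E) :
    |u t x - u s x| ≤ K * M * (|t - s| ^ (δ / α) + h ^ (δ / α)) := by
  wlog hst : s ≤ t generalizing t s
  · rw [abs_sub_comm, abs_sub_comm t s]
    exact this hs ht (le_of_not_ge hst)
  have hα : 0 < α := (NNReal.coe_pos.2 hδ0).trans_le hδα
  obtain ⟨j, hj⟩ := Nat.exists_eq_add_of_le (Nat.floor_mono (div_le_div_of_nonneg_right hst hh.le))
  have hmom_j (R : ℝ) (hR : 0 < R) :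
      (walkOperator μ)^[j] (fun y => min (‖y‖ ^ (δ : ℝ)) R) 0 ≤ M * (j : ℝ) ^ (δ / α) := by
    obtain rfl | hj0 := j.eq_zero_or_pos
    · simp [Real.zero_rpow, hδ0.ne', hα.ne', hR.le]
    · exact hmom j hj0 R hR
  have hjh : j * h ≤ |t - s| + h := by
    have := floor_div_sub_floor_div_mul_le (s := s) hh ht
    rwa [hj, Nat.cast_add, add_sub_cancel_left, ← abs_of_nonneg (sub_nonneg.2 hst)] at this
  have hscale : ‖h ^ (1 / α)‖ ^ (δ : ℝ) = h ^ (δ / α) := by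
    rw [Real.norm_of_nonneg (by positivity), ← Real.rpow_mul hh.le, one_div_mul_eq_div]
  calc |u t x - u s x|
      ≤ K * ‖h ^ (1 / α)‖ ^ (δ : ℝ) * (M * (j : ℝ) ^ (δ / α)) := by
        rw [hu.apply_eq_iterate hh ht, hu.apply_eq_iterate hh hs, hj]
        exact_mod_cast abs_iterate_add_walkOperator_sub_le hδ0 hδ1 (fun _ => hB _)
          (holderWith_comp_add_smul hφ x _) hmom_j _ 0
    _ = K * M * (j * h) ^ (δ / α) := by
        rw [hscale, Real.mul_rpow j.cast_nonneg hh.le]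
        ring
    _ ≤ K * M * (|t - s| + h) ^ (δ / α) := by gcongr
    _ ≤ K * M * (|t - s| ^ (δ / α) + h ^ (δ / α)) := by
        gcongr
        exact Real.rpow_add_le_add_rpow (abs_nonneg _) hh.le (by positivity)
          ((div_le_one hα).2 hδα)

end DiscreteScheme

/-- Time regularity of the discrete approximation scheme. -/
theorem stmt_2 {d : ℕ} (hd : 1 ≤ d) {Λ : Type*} [Nonempty Λ]
    (μ : Λ → Measure (EuclideanSpace ℝ (Fin d)))
    (hμ : ∀ k, IsProbabilityMeasure (μ k))
    (h α : ℝ) (hh : h ∈ Set.Ioo (0:ℝ) 1) (hα : α ∈ Set.Ioo (0:ℝ) 2)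
    (φ : EuclideanSpace ℝ (Fin d) → ℝ) (Mφ Cφ : ℝ)
    (hφb : ∀ x, |φ x| ≤ Mφ)
    (hφlip : ∀ x y, |φ x - φ y| ≤ Cφ * ‖x - y‖)
    (δ Mδ : ℝ) (hδ0 : 0 < δ) (hδ1 : δ ≤ 1) (hδα : α ≤ 1 → δ < α) (hMδ : 0 ≤ Mδ)
    (hmom : ∀ n : ℕ, 1 ≤ n → ∀ R : ℝ, 0 < R →
      (fun f : EuclideanSpace ℝ (Fin d) → ℝ =>
        fun x => ⨆ k, ∫ z, f (x + z) ∂(μ k))^[n]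
        (fun y => min (‖y‖ ^ δ) R) 0 ≤ Mδ * (n : ℝ) ^ (δ / α))
    (u : ℝ → EuclideanSpace ℝ (Fin d) → ℝ)
    (hu0 : ∀ t, 0 ≤ t → t < h → ∀ x, u t x = φ x)
    (hurec : ∀ t, h ≤ t → ∀ x,
      u t x = ⨆ k, ∫ z, u (t - h) (x + h ^ (1/α) • z) ∂(μ k)) :
    ∀ t ∈ Set.Icc (0:ℝ) 1, ∀ s ∈ Set.Icc (0:ℝ) 1, ∀ x,
      |u t x - u s x| ≤
        Cφ ^ δ * (2 * Mφ) ^ (1 - δ) * Mδ * (|t - s| ^ (δ / α) + h ^ (δ / α)) := by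
  have : Nonempty (Fin d) := ⟨⟨0, hd⟩⟩
  lift Cφ to ℝ≥0 using nonneg_of_abs_sub_le_mul_norm_sub hφlip
  lift Mφ to ℝ≥0 using (abs_nonneg _).trans (hφb 0)
  lift δ to ℝ≥0 using hδ0.le
  have hφ : LipschitzWith Cφ φ := .of_dist_le_mul fun x y => by
    rw [Real.dist_eq, dist_eq_norm]
    exact hφlip x y
  have hδ_le : δ ≤ α :=
    (le_or_gt α 1).elim (fun hα1 => (hδα hα1).le) fun hα1 => hδ1.trans hα1.le
  intro t ht s hs x
  simpa using stmt_2_general hh.1 hδ0 hδ1 hδ_le hMδ hφb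
    (holderWith_of_lipschitzWith_of_norm_le hφ hφb hδ1) hmom ⟨hu0, hurec⟩ ht.1 hs.1 x
end

section
/- Let p > 1, C > 0 and let v : ℝ × ℝ^d → ℝ be a bounded measurable function satisfying |v(t,x) − v(s,y)| ≤ C(|t−s|^{1/p} + |x−y|) for all t, s ∈ ℝ and x, y ∈ ℝ^d. Let ε ∈ (0,1) and let l, k be nonnegative integers with l + k ≥ 1. Then the mollification v^ε is smooth and for every (t,x) ∈ ℝ × ℝ^d the mixed derivative ∂_t^l D_x^k v^ε (the l-th time derivative of the k-th spatial Fréchet derivative) satisfies ‖∂_t^l D_x^k v^ε(t,x)‖ ≤ 2C M_{ζ,l,k} ε^{1 − pl − k}, where M_{ζ,l,k} := ∫_{ℝ×ℝ^d} ‖∂_t^l D_x^k ζ(τ,e)‖ de dτ. -/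
open MeasureTheory Set

/-!
Write `v^ε = v ⋆ ζ_ε`. All derivatives fall on the kernel, `∂_t^l D_x^k v^ε = v ⋆ ∂_t^l D_x^k ζ_ε`,
and for `l + k ≥ 1` the kernel `∂_t^l D_x^k ζ_ε` has vanishing integral. Hence `v(q - r)` may be
replaced by `v(q - r) - v(q)`, which is at most `2Cε` in absolute value for `r = (τ, e)` in the
support of `ζ_ε`, since there `|τ| ≤ ε^p` and `|e| ≤ ε`. Finally, rescaling gives
`∫ ‖∂_t^l D_x^k ζ_ε‖ = ε^{-pl-k} ∫ ‖∂_t^l D_x^k ζ‖`.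
-/

open ContinuousLinearMap Function
open scoped Convolution ContDiff

section Convolution

variable {G F F' : Type*} [NormedAddCommGroup G] [MeasurableSpace G]
  [NormedAddCommGroup F] [NormedSpace ℝ F] [NormedAddCommGroup F'] [NormedSpace ℝ F']
  {μ : Measure G} {V : G → ℝ} {g : G → F}

theorem clm_apply_convolution [CompleteSpace F] [CompleteSpace F'] {q : G}
    (hVg : ConvolutionExistsAt V g q (lsmul ℝ ℝ) μ) (A : F →L[ℝ] F') :
    A ((V ⋆[lsmul ℝ ℝ, μ] g) q) = (V ⋆[lsmul ℝ ℝ, μ] fun r => A (g r)) q := by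
  rw [convolution_def, ← A.integral_comp_comm hVg.integrable]
  simp only [convolution_def, lsmul_apply, map_smul]

variable [NormedSpace ℝ G] [BorelSpace G]

theorem clm_fderiv_convolution [μ.IsAddLeftInvariant] [SFinite μ] [CompleteSpace F]
    [CompleteSpace F'] (hV : LocallyIntegrable V μ)
    (hg : ContDiff ℝ 1 g) (hgc : HasCompactSupport g) (A : (G →L[ℝ] F) →L[ℝ] F') (q : G) :
    A (fderiv ℝ (V ⋆[lsmul ℝ ℝ, μ] g) q) = (V ⋆[lsmul ℝ ℝ, μ] fun r => A (fderiv ℝ g r)) q := by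
  have fderiv_eq : fderiv ℝ (V ⋆[lsmul ℝ ℝ, μ] g) q = (V ⋆[lsmul ℝ ℝ, μ] fderiv ℝ g) q :=
    (hgc.hasFDerivAt_convolution_right (lsmul ℝ ℝ) hV hg q).fderiv
  rw [fderiv_eq]
  exact clm_apply_convolution ((hgc.fderiv ℝ).convolutionExists_right _ hV
    (hg.continuous_fderiv one_ne_zero) q) A

theorem norm_convolution_le_of_integral_eq_zero [FiniteDimensional ℝ G]
    [μ.IsAddHaarMeasure] (hV : LocallyIntegrable V μ) (hg : Continuous g)
    (hgc : HasCompactSupport g) (hg0 : ∫ r, g r ∂μ = 0) {B : ℝ} {q : G}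
    (hB : ∀ r ∈ tsupport g, |V (q - r) - V q| ≤ B) :
    ‖(V ⋆[lsmul ℝ ℝ, μ] g) q‖ ≤ B * ∫ r, ‖g r‖ ∂μ := by
  have hgi : Integrable g μ := hg.integrable_of_hasCompactSupport hgc
  have hVg : Integrable (fun r => V (q - r) • g r) μ :=
    (hgc.convolutionExists_right (lsmul ℝ ℝ) hV hg q).integrable_swap
  have eq_integral_sub : (V ⋆[lsmul ℝ ℝ, μ] g) q = ∫ r, (V (q - r) - V q) • g r ∂μ := by
    simp only [sub_smul]
    rw [integral_sub hVg (hgi.fun_smul (V q)), integral_smul, hg0, smul_zero, sub_zero,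
      convolution_lsmul_swap]
  rw [eq_integral_sub, ← integral_const_mul]
  refine norm_integral_le_of_norm_le (hgi.norm.const_mul B) (.of_forall fun r => ?_)
  rw [norm_smul]
  by_cases hr : r ∈ tsupport g
  · exact mul_le_mul_of_nonneg_right (hB r hr) (norm_nonneg _)
  · simp [image_eq_zero_of_notMem_tsupport hr]

end Convolution

section ClmFDeriv

variable {G F F' : Type*} [NormedAddCommGroup G] [NormedSpace ℝ G] [NormedAddCommGroup F]
  [NormedSpace ℝ F] [NormedAddCommGroup F'] [NormedSpace ℝ F'] {f : G → F}

theorem contDiff_clm_fderiv (hf : ContDiff ℝ ∞ f) (A : (G →L[ℝ] F) →L[ℝ] F') :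
    ContDiff ℝ ∞ fun q => A (fderiv ℝ f q) :=
  A.contDiff.comp (hf.fderiv_right (by norm_cast))

theorem tsupport_clm_fderiv_subset (f : G → F) (A : (G →L[ℝ] F) →L[ℝ] F') :
    tsupport (fun q => A (fderiv ℝ f q)) ⊆ tsupport f :=
  (tsupport_comp_subset (map_zero A) _).trans (tsupport_fderiv_subset ℝ)

end ClmFDeriv

section MixedDeriv

variable {E F : Type*} [NormedAddCommGroup E] [NormedSpace ℝ E]
  [NormedAddCommGroup F] [NormedSpace ℝ F] {f : ℝ × E → F}

/-- The `k`-th spatial Fréchet derivative `D_x^k f` of a function on space-time `ℝ × E`. -/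
noncomputable def spatialDeriv (k : ℕ) (f : ℝ × E → F) (q : ℝ × E) : E [×k]→L[ℝ] F :=
  iteratedFDeriv ℝ k (fun y => f (q.1, y)) q.2

/-- The `l`-th time derivative `∂_t^l f` of a function on space-time `ℝ × E`. -/
noncomputable def timeDeriv {E : Type*} (l : ℕ) (f : ℝ × E → F) (q : ℝ × E) : F :=
  iteratedDeriv l (fun s => f (s, q.2)) q.1

/-- The mixed derivative `∂_t^l D_x^k f` of a function on space-time `ℝ × E`. -/
noncomputable def mixedDeriv (l k : ℕ) (f : ℝ × E → F) : ℝ × E → E [×k]→L[ℝ] F :=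
  timeDeriv l (spatialDeriv k f)

/-- Restriction of a derivative on `ℝ × E` to the spatial directions, with the new direction
uncurried into the multilinear map: the linear map that takes `D (D_x^k f)` to `D_x^{k+1} f`. -/
noncomputable def uncurrySpatial (E F : Type*) [NormedAddCommGroup E] [NormedSpace ℝ E]
    [NormedAddCommGroup F] [NormedSpace ℝ F] (k : ℕ) :
    (ℝ × E →L[ℝ] E [×k]→L[ℝ] F) →L[ℝ] E [×(k + 1)]→L[ℝ] F :=
  ((continuousMultilinearCurryLeftEquiv ℝ (fun _ : Fin (k + 1) => E)
      F).symm.toContinuousLinearEquiv : _ →L[ℝ] _) ∘L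
    (compL ℝ E (ℝ × E) (E [×k]→L[ℝ] F)).flip (inr ℝ ℝ E)

theorem spatialDeriv_zero (f : ℝ × E → F) : spatialDeriv 0 f =
    fun q => ((continuousMultilinearCurryFin0 ℝ E F).symm.toContinuousLinearEquiv : F →L[ℝ] _)
      (f q) := rfl

theorem spatialDeriv_succ {k : ℕ} (hf : Differentiable ℝ (spatialDeriv k f)) :
    spatialDeriv (k + 1) f = fun q => uncurrySpatial E F k (fderiv ℝ (spatialDeriv k f) q) := by
  ext1 q
  have hasFDerivAt_slice : HasFDerivAt (iteratedFDeriv ℝ k fun y => f (q.1, y))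
      (fderiv ℝ (spatialDeriv k f) q ∘L inr ℝ ℝ E) q.2 :=
    HasFDerivAt.comp (f := fun y => (q.1, y)) (g := spatialDeriv k f) q.2 (hf q).hasFDerivAt
      (hasFDerivAt_prodMk_right q.1 q.2)
  rw [spatialDeriv, iteratedFDeriv_succ_eq_comp_left, comp_apply, hasFDerivAt_slice.fderiv]
  rfl

theorem timeDeriv_zero {E : Type*} (f : ℝ × E → F) : timeDeriv 0 f = f := by
  ext1 q
  simp only [timeDeriv, iteratedDeriv_zero]

theorem timeDeriv_succ {l : ℕ} (hf : Differentiable ℝ (timeDeriv l f)) :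
    timeDeriv (l + 1) f =
      fun q => ContinuousLinearMap.apply ℝ F ((1, 0) : ℝ × E) (fderiv ℝ (timeDeriv l f) q) := by
  ext1 q
  have hasDerivAt_slice : HasDerivAt (fun s => timeDeriv l f (s, q.2))
      (fderiv ℝ (timeDeriv l f) q (1, 0)) q.1 :=
    HasFDerivAt.comp_hasDerivAt (l := timeDeriv l f) q.1 (hf q).hasFDerivAt
      ((hasDerivAt_id q.1).prodMk (hasDerivAt_const _ _))
  rw [timeDeriv, iteratedDeriv_succ]
  exact hasDerivAt_slice.deriv

theorem contDiff_spatialDeriv (hf : ContDiff ℝ ∞ f) (k : ℕ) :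
    ContDiff ℝ ∞ (spatialDeriv k f) := by
  induction k with
  | zero => exact spatialDeriv_zero f ▸ (ContinuousLinearMap.contDiff _).comp hf
  | succ k ih =>
    rw [spatialDeriv_succ (ih.differentiable (by simp))]
    exact contDiff_clm_fderiv ih _

theorem contDiff_timeDeriv (hf : ContDiff ℝ ∞ f) (l : ℕ) : ContDiff ℝ ∞ (timeDeriv l f) := by
  induction l with
  | zero => rwa [timeDeriv_zero]
  | succ l ih =>
    rw [timeDeriv_succ (ih.differentiable (by simp))]
    exact contDiff_clm_fderiv ih _

theorem contDiff_mixedDeriv (hf : ContDiff ℝ ∞ f) (l k : ℕ) : ContDiff ℝ ∞ (mixedDeriv l k f) :=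
  contDiff_timeDeriv (contDiff_spatialDeriv hf k) l

theorem tsupport_spatialDeriv_subset (hf : ContDiff ℝ ∞ f) (k : ℕ) :
    tsupport (spatialDeriv k f) ⊆ tsupport f := by
  induction k with
  | zero => exact spatialDeriv_zero f ▸ tsupport_comp_subset (map_zero _) f
  | succ k ih =>
    rw [spatialDeriv_succ ((contDiff_spatialDeriv hf k).differentiable (by simp))]
    exact (tsupport_clm_fderiv_subset _ _).trans ih

theorem tsupport_timeDeriv_subset (hf : ContDiff ℝ ∞ f) (l : ℕ) :
    tsupport (timeDeriv l f) ⊆ tsupport f := by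
  induction l with
  | zero => rw [timeDeriv_zero]
  | succ l ih =>
    rw [timeDeriv_succ ((contDiff_timeDeriv hf l).differentiable (by simp))]
    exact (tsupport_clm_fderiv_subset _ _).trans ih

theorem tsupport_mixedDeriv_subset (hf : ContDiff ℝ ∞ f) (l k : ℕ) :
    tsupport (mixedDeriv l k f) ⊆ tsupport f :=
  (tsupport_timeDeriv_subset (contDiff_spatialDeriv hf k) l).trans
    (tsupport_spatialDeriv_subset hf k)

theorem hasCompactSupport_spatialDeriv (hf : ContDiff ℝ ∞ f) (hfc : HasCompactSupport f) (k : ℕ) :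
    HasCompactSupport (spatialDeriv k f) :=
  hfc.mono' (subset_closure.trans (tsupport_spatialDeriv_subset hf k))

theorem hasCompactSupport_timeDeriv (hf : ContDiff ℝ ∞ f) (hfc : HasCompactSupport f) (l : ℕ) :
    HasCompactSupport (timeDeriv l f) :=
  hfc.mono' (subset_closure.trans (tsupport_timeDeriv_subset hf l))

theorem hasCompactSupport_mixedDeriv (hf : ContDiff ℝ ∞ f) (hfc : HasCompactSupport f)
    (l k : ℕ) : HasCompactSupport (mixedDeriv l k f) :=
  hasCompactSupport_timeDeriv (contDiff_spatialDeriv hf k)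
    (hasCompactSupport_spatialDeriv hf hfc k) l

theorem mixedDeriv_const {l k : ℕ} (hlk : l + k ≠ 0) (c : F) :
    mixedDeriv l k (fun _ : ℝ × E => c) = 0 := by
  ext1 q
  rcases eq_or_ne k 0 with rfl | hk
  · simp only [mixedDeriv, timeDeriv, spatialDeriv, iteratedDeriv_const, Pi.zero_apply]
    exact if_neg (by simpa using hlk)
  · simp only [mixedDeriv, timeDeriv, spatialDeriv, iteratedFDeriv_const_of_ne hk, Pi.zero_apply,
      iteratedDeriv_const, ite_self]

theorem mixedDeriv_const_smul (hf : ContDiff ℝ ∞ f) (l k : ℕ) (c : ℝ) (q : ℝ × E) :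
    mixedDeriv l k (fun q => c • f q) q = c • mixedDeriv l k f q := by
  have spatialDeriv_const_smul (q : ℝ × E) :
      spatialDeriv k (fun q => c • f q) q = c • spatialDeriv k f q :=
    iteratedFDeriv_const_smul_apply' <| ContDiff.contDiffAt <|
      (hf.comp (contDiff_const.prodMk contDiff_id)).of_le (mod_cast le_top)
  simp only [mixedDeriv, timeDeriv, spatialDeriv_const_smul]
  exact iteratedDeriv_fun_const_smul_field _ _

theorem mixedDeriv_comp_dilation (hf : ContDiff ℝ ∞ f) (l k : ℕ) (a b : ℝ) (q : ℝ × E) :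
    mixedDeriv l k (fun q => f (a * q.1, b • q.2)) q =
      (a ^ l * b ^ k) • mixedDeriv l k f (a * q.1, b • q.2) := by
  have spatialDeriv_comp_dilation (q : ℝ × E) :
      spatialDeriv k (fun q => f (a * q.1, b • q.2)) q =
        b ^ k • spatialDeriv k f (a * q.1, b • q.2) :=
    congrFun (iteratedFDeriv_comp_const_smul (f := fun y => f (a * q.1, y)) b <|
      (hf.comp (contDiff_const.prodMk contDiff_id)).of_le (mod_cast le_top)) q.2
  have timeDeriv_comp_dilation :
      iteratedDeriv l (fun s => spatialDeriv k f (a * s, b • q.2)) q.1 =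
        a ^ l • mixedDeriv l k f (a * q.1, b • q.2) :=
    congrFun (iteratedDeriv_comp_const_smul (((contDiff_spatialDeriv hf k).comp
      (contDiff_id.prodMk contDiff_const)).of_le (mod_cast le_top)) a) q.1
  rw [mixedDeriv, timeDeriv]
  simp only [spatialDeriv_comp_dilation]
  rw [iteratedDeriv_fun_const_smul_field, timeDeriv_comp_dilation, smul_smul, mul_comm]

section Convolution

variable [CompleteSpace F] [MeasurableSpace E] [BorelSpace (ℝ × E)] {μ : Measure (ℝ × E)}
  {V : ℝ × E → ℝ} {g : ℝ × E → F}

theorem spatialDeriv_convolution [μ.IsAddLeftInvariant] [SFinite μ]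
    (hV : LocallyIntegrable V μ) (hg : ContDiff ℝ ∞ g) (hgc : HasCompactSupport g) (k : ℕ) :
    spatialDeriv k (V ⋆[lsmul ℝ ℝ, μ] g) = V ⋆[lsmul ℝ ℝ, μ] spatialDeriv k g := by
  induction k with
  | zero =>
    rw [spatialDeriv_zero, spatialDeriv_zero]
    ext1 q
    exact clm_apply_convolution (hgc.convolutionExists_right _ hV hg.continuous q) _
  | succ k ih =>
    have hgk := contDiff_spatialDeriv hg k
    have hgkc := hasCompactSupport_spatialDeriv hg hgc k
    have hVgk : ContDiff ℝ ∞ (V ⋆[lsmul ℝ ℝ, μ] spatialDeriv k g) :=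
      hgkc.contDiff_convolution_right _ hV hgk
    rw [spatialDeriv_succ (hgk.differentiable (by simp)),
      spatialDeriv_succ (ih ▸ hVgk.differentiable (by simp)), ih]
    ext1 q
    exact clm_fderiv_convolution hV (hgk.of_le (mod_cast le_top)) hgkc _ q

theorem timeDeriv_convolution [μ.IsAddLeftInvariant] [SFinite μ]
    (hV : LocallyIntegrable V μ) (hg : ContDiff ℝ ∞ g) (hgc : HasCompactSupport g) (l : ℕ) :
    timeDeriv l (V ⋆[lsmul ℝ ℝ, μ] g) = V ⋆[lsmul ℝ ℝ, μ] timeDeriv l g := by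
  induction l with
  | zero => simp only [timeDeriv_zero]
  | succ l ih =>
    have hgl := contDiff_timeDeriv hg l
    have hglc := hasCompactSupport_timeDeriv hg hgc l
    have hVgl : ContDiff ℝ ∞ (V ⋆[lsmul ℝ ℝ, μ] timeDeriv l g) :=
      hglc.contDiff_convolution_right _ hV hgl
    rw [timeDeriv_succ (hgl.differentiable (by simp)),
      timeDeriv_succ (ih ▸ hVgl.differentiable (by simp)), ih]
    ext1 q
    exact clm_fderiv_convolution hV (hgl.of_le (mod_cast le_top)) hglc _ q

theorem mixedDeriv_convolution [μ.IsAddLeftInvariant] [SFinite μ]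
    (hV : LocallyIntegrable V μ) (hg : ContDiff ℝ ∞ g) (hgc : HasCompactSupport g) (l k : ℕ) :
    mixedDeriv l k (V ⋆[lsmul ℝ ℝ, μ] g) = V ⋆[lsmul ℝ ℝ, μ] mixedDeriv l k g := by
  rw [mixedDeriv, spatialDeriv_convolution hV hg hgc,
    timeDeriv_convolution hV (contDiff_spatialDeriv hg k)
      (hasCompactSupport_spatialDeriv hg hgc k), mixedDeriv]

variable [FiniteDimensional ℝ E] [μ.IsAddHaarMeasure]

-- `∫ ∂_t^l D_x^k g` is the mixed derivative of the constant `1 ⋆ g`.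
theorem integral_mixedDeriv_eq_zero (hg : ContDiff ℝ ∞ g) (hgc : HasCompactSupport g) {l k : ℕ}
    (hlk : l + k ≠ 0) : ∫ q, mixedDeriv l k g q ∂μ = 0 := by
  have one_convolution : (fun _ => (1 : ℝ)) ⋆[lsmul ℝ ℝ, μ] g = fun _ => ∫ q, g q ∂μ := by
    ext1 q
    simp only [convolution_lsmul_swap, one_smul]
  have deriv_eq := mixedDeriv_convolution (μ := μ) (locallyIntegrable_const 1) hg hgc l k
  rw [one_convolution, mixedDeriv_const hlk] at deriv_eq
  simpa only [convolution_lsmul_swap, one_smul, Pi.zero_apply] using (congrFun deriv_eq 0).symm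

theorem norm_mixedDeriv_convolution_le (hV : LocallyIntegrable V μ) (hg : ContDiff ℝ ∞ g)
    (hgc : HasCompactSupport g) {l k : ℕ} (hlk : l + k ≠ 0) {B : ℝ} {q : ℝ × E}
    (hB : ∀ r ∈ tsupport g, |V (q - r) - V q| ≤ B) :
    ‖mixedDeriv l k (V ⋆[lsmul ℝ ℝ, μ] g) q‖ ≤ B * ∫ r, ‖mixedDeriv l k g r‖ ∂μ := by
  rw [mixedDeriv_convolution hV hg hgc]
  exact norm_convolution_le_of_integral_eq_zero hV (contDiff_mixedDeriv hg l k).continuous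
    (hasCompactSupport_mixedDeriv hg hgc l k) (integral_mixedDeriv_eq_zero hg hgc hlk)
    fun r hr => hB r (tsupport_mixedDeriv_subset hg l k hr)

end Convolution

end MixedDeriv

section ParabolicHolder

variable {E : Type*} [NormedAddCommGroup E] {C p : ℝ} {V : ℝ × E → ℝ}

/-- Lipschitz continuity with constant `C` with respect to the parabolic distance
`|t - s|^{1/p} + ‖x - y‖` on space-time. -/
def ParabolicHolderWith (C p : ℝ) (V : ℝ × E → ℝ) : Prop :=
  ∀ q r, |V q - V r| ≤ C * (|q.1 - r.1| ^ (1 / p) + ‖q.2 - r.2‖)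

namespace ParabolicHolderWith

theorem const_nonneg (hV : ParabolicHolderWith C p V) : 0 ≤ C := by
  simpa using (abs_nonneg _).trans (hV (1, 0) (0, 0))

theorem continuous (hV : ParabolicHolderWith C p V) (hp : 0 < p) : Continuous V := by
  refine continuous_iff_continuousAt.2 fun q => tendsto_iff_dist_tendsto_zero.2 ?_
  have hbound : Continuous fun r : ℝ × E => C * (|r.1 - q.1| ^ (1 / p) + ‖r.2 - q.2‖) :=
    continuous_const.mul (((continuous_fst.sub continuous_const).abs.rpow_const fun _ =>
      .inr (one_div_pos.2 hp).le).add (continuous_snd.sub continuous_const).norm)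
  refine squeeze_zero (fun _ => dist_nonneg) (fun r => hV r q) ?_
  simpa [hp.ne'] using hbound.tendsto q

theorem abs_sub_le (hV : ParabolicHolderWith C p V) (hp : 0 < p) {ε : ℝ} (hε : 0 ≤ ε)
    (q : ℝ × E) {r : ℝ × E} (hr₁ : |r.1| ≤ ε ^ p) (hr₂ : ‖r.2‖ ≤ ε) :
    |V (q - r) - V q| ≤ 2 * C * ε := by
  have time_le : |r.1| ^ (1 / p) ≤ ε :=
    calc |r.1| ^ (1 / p) ≤ (ε ^ p) ^ (1 / p) :=
          Real.rpow_le_rpow (abs_nonneg _) hr₁ (one_div_pos.2 hp).le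
      _ = ε := by rw [one_div, Real.rpow_rpow_inv hε hp.ne']
  calc |V (q - r) - V q| ≤ C * (|(q - r).1 - q.1| ^ (1 / p) + ‖(q - r).2 - q.2‖) := hV _ _
    _ = C * (|r.1| ^ (1 / p) + ‖r.2‖) := by simp
    _ ≤ C * (ε + ε) := mul_le_mul_of_nonneg_left (add_le_add time_le hr₂) hV.const_nonneg
    _ = 2 * C * ε := by ring

end ParabolicHolderWith

end ParabolicHolder

section Mollification

open Module (finrank)

variable {E : Type*} [NormedAddCommGroup E] [NormedSpace ℝ E] {ζ : ℝ × E → ℝ} {p ε : ℝ}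

/-- The rescaled kernel `ζ_{ε,p}(τ, e) = ε^{-(p + dim E)} ζ(τ / ε^p, e / ε)`. -/
noncomputable def rescaledKernel (p ε : ℝ) (ζ : ℝ × E → ℝ) (q : ℝ × E) : ℝ :=
  ε ^ (-(p + finrank ℝ E)) * ζ (q.1 / ε ^ p, ε⁻¹ • q.2)

theorem contDiff_rescaledKernel (hζ : ContDiff ℝ ∞ ζ) : ContDiff ℝ ∞ (rescaledKernel p ε ζ) :=
  contDiff_const.mul <| hζ.comp <| (contDiff_fst.div_const _).prodMk (contDiff_snd.const_smul _)

theorem tsupport_rescaledKernel_subset (hε : 0 < ε)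
    (hζ : support ζ ⊆ Icc (-1) 1 ×ˢ Metric.closedBall 0 1) :
    tsupport (rescaledKernel p ε ζ) ⊆ Icc (-ε ^ p) (ε ^ p) ×ˢ Metric.closedBall 0 ε := by
  refine closure_minimal (fun q hq => ?_) (isClosed_Icc.prod Metric.isClosed_closedBall)
  obtain ⟨hτ, he⟩ := hζ (right_ne_zero_of_mul hq)
  have hεp : 0 < ε ^ p := Real.rpow_pos_of_pos hε p
  rw [mem_Icc, ← abs_le, abs_div, abs_of_pos hεp, div_le_one hεp] at hτ
  rw [mem_closedBall_zero_iff, norm_smul, norm_inv, Real.norm_of_nonneg hε.le,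
    inv_mul_le_one₀ hε] at he
  exact ⟨abs_le.1 hτ, mem_closedBall_zero_iff.2 he⟩

theorem hasCompactSupport_rescaledKernel [FiniteDimensional ℝ E] (hε : 0 < ε)
    (hζ : support ζ ⊆ Icc (-1) 1 ×ˢ Metric.closedBall 0 1) :
    HasCompactSupport (rescaledKernel p ε ζ) :=
  (isCompact_Icc.prod (isCompact_closedBall _ _)).of_isClosed_subset (isClosed_tsupport _)
    (tsupport_rescaledKernel_subset hε hζ)

theorem norm_mixedDeriv_rescaledKernel (hζ : ContDiff ℝ ∞ ζ) (hε : 0 < ε) (l k : ℕ)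
    (q : ℝ × E) :
    ‖mixedDeriv l k (rescaledKernel p ε ζ) q‖ =
      ε ^ (-(p + finrank ℝ E)) * ε ^ (-(p * l) - k) *
        ‖mixedDeriv l k ζ (q.1 / ε ^ p, ε⁻¹ • q.2)‖ := by
  have hexp : ((ε ^ p)⁻¹ ^ l * ε⁻¹ ^ k : ℝ) = ε ^ (-(p * l) - k) := by
    rw [Real.rpow_sub hε, Real.rpow_neg hε.le, Real.rpow_mul hε.le, Real.rpow_natCast,
      Real.rpow_natCast, inv_pow, inv_pow, div_eq_mul_inv]
  have hkernel : rescaledKernel p ε ζ =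
      fun q => ε ^ (-(p + finrank ℝ E)) • ζ ((ε ^ p)⁻¹ * q.1, ε⁻¹ • q.2) := by
    ext1 q
    rw [rescaledKernel, div_eq_inv_mul, smul_eq_mul]
  have hdilate : ContDiff ℝ ∞ fun q : ℝ × E => ζ ((ε ^ p)⁻¹ * q.1, ε⁻¹ • q.2) :=
    hζ.comp ((contDiff_const.mul contDiff_fst).prodMk (contDiff_snd.const_smul _))
  rw [hkernel, mixedDeriv_const_smul hdilate, mixedDeriv_comp_dilation hζ, hexp, smul_smul,
    norm_smul, Real.norm_of_nonneg (by positivity), div_eq_inv_mul]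

variable [FiniteDimensional ℝ E] [MeasurableSpace E] [BorelSpace E] (μ : Measure E)
  [μ.IsAddHaarMeasure]

theorem integral_integral_comp_dilation {F : Type*} [NormedAddCommGroup F] [NormedSpace ℝ F]
    {a b : ℝ} (ha : 0 ≤ a) (hb : 0 ≤ b) (f : ℝ × E → F) :
    ∫ τ, ∫ e, f (τ / a, b⁻¹ • e) ∂μ = (a * b ^ finrank ℝ E) • ∫ τ, ∫ e, f (τ, e) ∂μ := by
  calc ∫ τ, ∫ e, f (τ / a, b⁻¹ • e) ∂μ
      = ∫ τ, b ^ finrank ℝ E • ∫ e, f (τ / a, e) ∂μ := by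
        congr 1 with τ
        exact Measure.integral_comp_inv_smul_of_nonneg μ (fun e => f (τ / a, e)) hb
    _ = (a * b ^ finrank ℝ E) • ∫ τ, ∫ e, f (τ, e) ∂μ := by
        rw [integral_smul, Measure.integral_comp_div (fun τ => ∫ e, f (τ, e) ∂μ),
          abs_of_nonneg ha, smul_smul, mul_comm]

theorem integral_norm_mixedDeriv_rescaledKernel (hζ : ContDiff ℝ ∞ ζ) (hε : 0 < ε) (l k : ℕ) :
    ∫ τ, ∫ e, ‖mixedDeriv l k (rescaledKernel p ε ζ) (τ, e)‖ ∂μ =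
      ε ^ (-(p * l) - k) * ∫ τ, ∫ e, ‖mixedDeriv l k ζ (τ, e)‖ ∂μ := by
  have hvol : ε ^ (-(p + finrank ℝ E)) * (ε ^ p * ε ^ finrank ℝ E) = 1 := by
    rw [← Real.rpow_natCast, ← Real.rpow_add hε, ← Real.rpow_add hε, neg_add_cancel,
      Real.rpow_zero]
  simp only [norm_mixedDeriv_rescaledKernel hζ hε, integral_const_mul]
  rw [integral_integral_comp_dilation μ (by positivity) hε.le fun q => ‖mixedDeriv l k ζ q‖,
    smul_eq_mul, mul_mul_mul_comm, hvol, one_mul]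

/-- The mollification `v^ε` of `V` with the rescaled kernel `ζ_{ε,p}`, as an iterated integral. -/
noncomputable def mollify (p ε : ℝ) (ζ V : ℝ × E → ℝ) (q : ℝ × E) : ℝ :=
  ∫ τ, ∫ e, V (q - (τ, e)) * rescaledKernel p ε ζ (τ, e) ∂μ

theorem mollify_eq_convolution {V : ℝ × E → ℝ} (hV : LocallyIntegrable V (volume.prod μ))
    (hζ : ContDiff ℝ ∞ ζ) (hζc : HasCompactSupport (rescaledKernel p ε ζ)) :
    mollify μ p ε ζ V = V ⋆[lsmul ℝ ℝ, volume.prod μ] rescaledKernel p ε ζ := by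
  ext1 q
  have hint : Integrable (fun r => V (q - r) • rescaledKernel p ε ζ r) (volume.prod μ) :=
    (hζc.convolutionExists_right (lsmul ℝ ℝ) hV
      (contDiff_rescaledKernel hζ).continuous q).integrable_swap
  rw [convolution_lsmul_swap, integral_prod _ hint]
  rfl

theorem contDiff_mollify {V : ℝ × E → ℝ} (hV : LocallyIntegrable V (volume.prod μ)) (hε : 0 < ε)
    (hζ : ContDiff ℝ ∞ ζ) (hζsupp : support ζ ⊆ Icc (-1) 1 ×ˢ Metric.closedBall 0 1) :
    ContDiff ℝ ∞ (mollify μ p ε ζ V) := by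
  have hkerc := hasCompactSupport_rescaledKernel (p := p) hε hζsupp
  rw [mollify_eq_convolution μ hV hζ hkerc]
  exact hkerc.contDiff_convolution_right _ hV (contDiff_rescaledKernel hζ)

theorem norm_mixedDeriv_mollify_le {C : ℝ} {V : ℝ × E → ℝ} (hV : ParabolicHolderWith C p V)
    (hp : 0 < p) (hε : 0 < ε) (hζ : ContDiff ℝ ∞ ζ)
    (hζsupp : support ζ ⊆ Icc (-1) 1 ×ˢ Metric.closedBall 0 1) {l k : ℕ} (hlk : l + k ≠ 0)
    (q : ℝ × E) :
    ‖mixedDeriv l k (mollify μ p ε ζ V) q‖ ≤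
      2 * C * (∫ τ, ∫ e, ‖mixedDeriv l k ζ (τ, e)‖ ∂μ) * ε ^ (1 - p * l - k) := by
  have hVint : LocallyIntegrable V (volume.prod μ) := (hV.continuous hp).locallyIntegrable
  have hker : ContDiff ℝ ∞ (rescaledKernel p ε ζ) := contDiff_rescaledKernel hζ
  have hkerc := hasCompactSupport_rescaledKernel (p := p) hε hζsupp
  have hosc : ∀ r ∈ tsupport (rescaledKernel p ε ζ), |V (q - r) - V q| ≤ 2 * C * ε :=
    fun r hr =>
      have ⟨hτ, he⟩ := tsupport_rescaledKernel_subset hε hζsupp hr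
      hV.abs_sub_le hp hε.le q (abs_le.2 hτ) (mem_closedBall_zero_iff.1 he)
  have hint : Integrable (mixedDeriv l k (rescaledKernel p ε ζ)) (volume.prod μ) :=
    (contDiff_mixedDeriv hker l k).continuous.integrable_of_hasCompactSupport
      (hasCompactSupport_mixedDeriv hker hkerc l k)
  rw [mollify_eq_convolution μ hVint hζ hkerc]
  calc ‖mixedDeriv l k (V ⋆[lsmul ℝ ℝ, volume.prod μ] rescaledKernel p ε ζ) q‖
      ≤ 2 * C * ε * ∫ r, ‖mixedDeriv l k (rescaledKernel p ε ζ) r‖ ∂(volume.prod μ) :=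
        norm_mixedDeriv_convolution_le hVint hker hkerc hlk hosc
    _ = 2 * C * ε * (ε ^ (-(p * l) - k) * ∫ τ, ∫ e, ‖mixedDeriv l k ζ (τ, e)‖ ∂μ) := by
        rw [integral_prod _ hint.norm, integral_norm_mixedDeriv_rescaledKernel μ hζ hε]
    _ = 2 * C * (∫ τ, ∫ e, ‖mixedDeriv l k ζ (τ, e)‖ ∂μ) * ε ^ (1 - p * l - k) := by
        rw [show 1 - p * l - k = 1 + (-(p * l) - k) by ring, Real.rpow_add hε, Real.rpow_one]
        ring

theorem stmt_4_general (hζ : ContDiff ℝ ∞ ζ)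
    (hζsupp : support ζ ⊆ Icc (-1) 1 ×ˢ Metric.closedBall 0 1) {C : ℝ} (hp : 0 < p)
    {v : ℝ → E → ℝ} (hv : ∀ t s x y, |v t x - v s y| ≤ C * (|t - s| ^ (1 / p) + ‖x - y‖))
    (hε : 0 < ε) {vε : ℝ → E → ℝ}
    (hvε : ∀ t x, vε t x = ∫ τ, ∫ e,
      v (t - τ) (x - e) * (ε ^ (-(p + finrank ℝ E)) * ζ (τ / ε ^ p, ε⁻¹ • e)) ∂μ)
    {l k : ℕ} (hlk : 1 ≤ l + k) :
    ContDiff ℝ ∞ (fun q : ℝ × E => vε q.1 q.2) ∧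
    ∀ t x, ‖iteratedDeriv l (fun σ => iteratedFDeriv ℝ k (fun y => vε σ y) x) t‖ ≤
      2 * C * (∫ τ, ∫ e,
          ‖iteratedDeriv l (fun σ => iteratedFDeriv ℝ k (fun e' => ζ (σ, e')) e) τ‖ ∂μ) *
        ε ^ (1 - p * l - k) := by
  have hV : ParabolicHolderWith C p (uncurry v) := fun q r => hv q.1 r.1 q.2 r.2
  have hvε_eq : mollify μ p ε ζ (uncurry v) = fun q => vε q.1 q.2 :=
    funext fun q => (hvε q.1 q.2).symm
  have hbound := norm_mixedDeriv_mollify_le μ hV hp hε hζ hζsupp (Nat.one_le_iff_ne_zero.1 hlk)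
  rw [hvε_eq] at hbound
  exact ⟨hvε_eq ▸ contDiff_mollify μ (hV.continuous hp).locallyIntegrable hε hζ hζsupp,
    fun t x => hbound (t, x)⟩

end Mollification

/-- Standard mollifier derivative estimates:
`‖∂_t^l D_x^k v^ε‖ ≤ 2 C M_{ζ,l,k} ε^{1 - pl - k}`, and `v^ε` is smooth. -/
theorem stmt_4 {d : ℕ} (hd : 1 ≤ d)
    (ζ : ℝ × EuclideanSpace ℝ (Fin d) → ℝ)
    (hζsmooth : ContDiff ℝ (⊤ : ℕ∞) ζ)
    (hζnonneg : ∀ q, 0 ≤ ζ q)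
    (hζint : ∫ q : ℝ × EuclideanSpace ℝ (Fin d), ζ q = 1)
    (hζsupp : Function.support ζ ⊆
      Set.Icc (-1:ℝ) 0 ×ˢ Metric.closedBall (0 : EuclideanSpace ℝ (Fin d)) 1)
    (p C : ℝ) (hp : 1 < p) (hC : 0 < C)
    (v : ℝ → EuclideanSpace ℝ (Fin d) → ℝ)
    (hvm : Measurable (Function.uncurry v))
    (hvb : ∃ M, ∀ t x, |v t x| ≤ M)
    (hvh : ∀ t s x y, |v t x - v s y| ≤ C * (|t - s| ^ (1/p) + ‖x - y‖))
    (ε : ℝ) (hε : ε ∈ Set.Ioo (0:ℝ) 1)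
    (vε : ℝ → EuclideanSpace ℝ (Fin d) → ℝ)
    (hvε : ∀ t x, vε t x = ∫ (τ : ℝ), ∫ (e : EuclideanSpace ℝ (Fin d)),
      v (t - τ) (x - e) * (ε ^ (-(p + (d:ℝ))) * ζ (τ / ε ^ p, ε⁻¹ • e)))
    (l k : ℕ) (hlk : 1 ≤ l + k) :
    ContDiff ℝ (⊤ : ℕ∞) (fun q : ℝ × EuclideanSpace ℝ (Fin d) => vε q.1 q.2) ∧
    ∀ t x,
      ‖iteratedDeriv l (fun σ => iteratedFDeriv ℝ k (fun y => vε σ y) x) t‖ ≤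
      2 * C *
        (∫ (τ : ℝ), ∫ (e : EuclideanSpace ℝ (Fin d)),
          ‖iteratedDeriv l (fun σ => iteratedFDeriv ℝ k (fun e' => ζ (σ, e')) e) τ‖) *
        ε ^ (1 - p * (l : ℝ) - (k : ℝ)) := by
  exact stmt_4_general volume hζsmooth
    (hζsupp.trans (prod_mono (Icc_subset_Icc_right zero_le_one) le_rfl)) (zero_lt_one.trans hp)
    hvh hε.1 (by simpa only [finrank_euclideanSpace_fin] using hvε) hlk
end

section
/- Let α ∈ (1,2). Assume: (C1) each μ_k has a finite first moment and ∫_ℝ z dμ_k(z) = 0; (C2) there exist q₀ > 0 and C_β > 0 such that for every k = (k₁,k₂) ∈ Λ and every real r ≥ 1 the six quantities |β_{1,k}(−r^{1/α})|, |β_{2,k}(r^{1/α})|, ∫_{−∞}^{−1} |β_{1,k}(r^{1/α} x)| |x|^{−α} dx, ∫_1^∞ |β_{2,k}(r^{1/α} x)| x^{−α} dx, ∫_{−1}^0 |β_{1,k}(r^{1/α} x)| / |x|^{α−1} dx, and ∫_0^1 |β_{2,k}(r^{1/α} x)| / x^{α−1} dx are all ≤ C_β r^{−q₀}; and in addition sup_{k∈Λ}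 of each of |β_{1,k}(−1)|, |β_{2,k}(1)|, ∫_0^1 |α β_{1,k}(−λ) + β′_{1,k}(−λ) λ| λ^{1−α} dλ, and ∫_0^1 |α β_{2,k}(λ) − β′_{2,k}(λ) λ| λ^{1−α} dλ is ≤ C_β. Then for every three times continuously differentiable φ : ℝ → ℝ with φ, φ′, φ″, φ‴ bounded, every s ∈ (0,1] and every x ∈ ℝ, (1/s) · | sup_{k∈Λ} ∫_ℝ φ(x + s^{1/α} z) dμ_k(z) − φ(x) − s · sup_{(k₁,k₂)∈Λ} ( k₁ ∫_{−∞}^0 δ_λφ(x) |λ|^{−1−α} dλ + k₂ ∫_0^∞ δ_λφ(x) λ^{−1−α} dλ ) | ≤ (16 C_β ‖φ′‖_∞ + 2 C_β ‖φ″‖_∞) s^{q₀} + 4 C_β ‖φ″‖_∞ s^{(2−α)/α}, where δ_λφ(x) := φ(x+λ) − φ(x) − φ′(x) λ. -/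
open MeasureTheory Set Filter
open scoped NNReal

/-!
Put `h = s ^ (1 / α)`. As `μ_k` is centred, `∫ φ (x + h z) dμ_k - φ x` is the `μ_k`-integral of
the first order Taylor remainder `δ_{h z} φ (x)`. Its derivative `g l = φ' (x + l) - φ' x` is
bounded by `2 ‖φ'‖` and by `‖φ''‖ |l|`. The layer cake formula writes the integral of a primitive
of `g` against any measure as the integral of `g` against the tail of that measure. For the law of
`h z` and for `s` times the Lévy measure, these tails differ by `s β (l / h) |l| ^ (-α)`, and the
integrals of `|β (l / h)|` in the hypotheses control the integral of `g` against this difference: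
use `|g| ≤ 2 ‖φ'‖` for `|l| ≥ 1` and `|g l| ≤ ‖φ''‖ |l|` for `|l| < 1`.
-/

section LayerCake

theorem setIntegral_comp_neg_measureNeg (ν : Measure ℝ) (s : Set ℝ) (f : ℝ → ℝ) :
    ∫ z in s, f (-z) ∂ν.neg = ∫ z in -s, f z ∂ν := by
  simpa [Measure.neg] using
    setIntegral_map_equiv (μ := ν) (MeasurableEquiv.neg ℝ) (fun z ↦ f (-z)) s

theorem setIntegral_neg_of_subset_Ioi {s : Set ℝ} (hs : MeasurableSet s) (hpos : s ⊆ Ioi 0)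
    (f : ℝ → ℝ → ℝ) : ∫ l in -s, f l |l| = ∫ l in s, f (-l) l := by
  rw [← setIntegral_comp_neg_measureNeg volume s fun l ↦ f l |l|, Measure.neg_eq_self]
  refine setIntegral_congr_fun hs fun l hl ↦ ?_
  rw [abs_neg, abs_of_pos (hpos hl)]

variable {ν : Measure ℝ}

theorem integrable_uncurry_indicator_Ioi {E : Type*} [NormedAddCommGroup E] [NormedSpace ℝ E]
    [SFinite ν] {a : ℝ} {g : ℝ → E}
    (hg : AEStronglyMeasurable g (volume.restrict (Ioi a))) (hfin : ∀ l > a, ν (Ioi l) ≠ ⊤)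
    (hint : IntegrableOn (fun l ↦ ν.real (Ioi l) • g l) (Ioi a)) :
    Integrable (Function.uncurry fun l z ↦ (Ioi l).indicator (fun _ ↦ g l) z)
      ((volume.restrict (Ioi a)).prod (ν.restrict (Ioi a))) := by
  have htail {l : ℝ} (hl : a < l) : (ν.restrict (Ioi a)) (Ioi l) = ν (Ioi l) :=
    Measure.restrict_eq_self ν (Ioi_subset_Ioi hl.le)
  have hmeas : AEStronglyMeasurable (Function.uncurry fun l z ↦ (Ioi l).indicator (fun _ ↦ g l) z)
      ((volume.restrict (Ioi a)).prod (ν.restrict (Ioi a))) :=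
    hg.comp_fst.indicator (measurableSet_lt measurable_fst measurable_snd)
  refine (integrable_prod_iff hmeas).2 ⟨?_, ?_⟩
  · filter_upwards [ae_restrict_mem measurableSet_Ioi] with l hl
    exact (integrable_indicator_iff measurableSet_Ioi).2
      (integrableOn_const (C := g l) (by rw [htail hl]; exact hfin l hl))
  · refine hint.norm.congr ?_
    filter_upwards [ae_restrict_mem measurableSet_Ioi] with l hl
    simp only [Function.uncurry, norm_indicator_eq_indicator_norm]
    rw [integral_indicator measurableSet_Ioi, setIntegral_const, norm_smul, smul_eq_mul,
      Real.norm_of_nonneg measureReal_nonneg, measureReal_def, measureReal_def, htail hl]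

theorem setIntegral_intervalIntegral_eq_setIntegral_measureReal_Ioi_smul {E : Type*}
    [NormedAddCommGroup E] [NormedSpace ℝ E] [CompleteSpace E] [SFinite ν] {a : ℝ} {g : ℝ → E}
    (hg : AEStronglyMeasurable g (volume.restrict (Ioi a))) (hfin : ∀ l > a, ν (Ioi l) ≠ ⊤)
    (hint : IntegrableOn (fun l ↦ ν.real (Ioi l) • g l) (Ioi a)) :
    ∫ z in Ioi a, (∫ l in a..z, g l) ∂ν = ∫ l in Ioi a, ν.real (Ioi l) • g l := by
  calc ∫ z in Ioi a, (∫ l in a..z, g l) ∂ν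
      = ∫ z in Ioi a, (∫ l in Ioi a, (Iio z).indicator g l) ∂ν := by
        refine setIntegral_congr_fun measurableSet_Ioi fun z hz ↦ ?_
        rw [setIntegral_indicator measurableSet_Iio, Ioi_inter_Iio, ← integral_Ioc_eq_integral_Ioo,
          ← intervalIntegral.integral_of_le (mem_Ioi.1 hz).le]
    _ = ∫ l in Ioi a, (∫ z in Ioi a, (Ioi l).indicator (fun _ ↦ g l) z ∂ν) :=
        (integral_integral_swap (integrable_uncurry_indicator_Ioi hg hfin hint)).symm
    _ = ∫ l in Ioi a, ν.real (Ioi l) • g l := by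
        refine setIntegral_congr_fun measurableSet_Ioi fun l hl ↦ ?_
        rw [setIntegral_indicator measurableSet_Ioi,
          inter_eq_right.2 (Ioi_subset_Ioi (mem_Ioi.1 hl).le), setIntegral_const]

theorem integrableOn_measureReal_Ioi [IsFiniteMeasure ν]
    (hν : IntegrableOn (fun z ↦ z) (Ioi 0) ν) :
    IntegrableOn (fun l ↦ ν.real (Ioi l)) (Ioi 0) := by
  have hpos : 0 ≤ᵐ[ν.restrict (Ioi 0)] fun z ↦ z := by
    filter_upwards [ae_restrict_mem measurableSet_Ioi] with z hz using (mem_Ioi.1 hz).le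
  have hmeas : Measurable fun l ↦ ν (Ioi l) :=
    Antitone.measurable fun _ _ hxy ↦ measure_mono (Ioi_subset_Ioi hxy)
  refine integrable_toReal_of_lintegral_ne_top hmeas.aemeasurable (ne_of_lt ?_)
  calc ∫⁻ l in Ioi 0, ν (Ioi l)
      = ∫⁻ l in Ioi 0, (ν.restrict (Ioi 0)) {z | l < z} :=
        setLIntegral_congr_fun measurableSet_Ioi fun l hl ↦
          (Measure.restrict_eq_self ν (Ioi_subset_Ioi (mem_Ioi.1 hl).le)).symm
    _ = ∫⁻ z in Ioi 0, ENNReal.ofReal z ∂ν :=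
        (lintegral_eq_lintegral_meas_lt _ hpos measurable_id.aemeasurable).symm
    _ < ⊤ := hν.lintegral_lt_top

end LayerCake

section SplitAtOne

variable {A D : ℝ} {w g : ℝ → ℝ}

theorem integrableOn_Ioi_mul_of_abs_le (hg : Continuous g) (hA : ∀ l, |g l| ≤ A)
    (hD : ∀ l, |g l| ≤ D * |l|) (hlarge : IntegrableOn w (Ici 1))
    (hsmall : IntegrableOn (fun l ↦ w l * l) (Ioo 0 1)) :
    IntegrableOn (fun l ↦ w l * g l) (Ioi 0) := by
  rw [← Ioo_union_Ici_eq_Ioi zero_lt_one]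
  refine IntegrableOn.union ?_ (hlarge.mul_bdd hg.aestronglyMeasurable (ae_of_all _ hA))
  have hquot : ∀ᵐ l ∂volume.restrict (Ioo (0 : ℝ) 1), ‖g l / l‖ ≤ D := by
    filter_upwards [ae_restrict_mem measurableSet_Ioo] with l hl
    rw [norm_div, Real.norm_eq_abs, Real.norm_eq_abs, div_le_iff₀ (abs_pos.2 hl.1.ne')]
    exact hD l
  refine IntegrableOn.congr_fun (hsmall.mul_bdd
    (hg.measurable.div measurable_id).aestronglyMeasurable hquot) (fun l hl ↦ ?_) measurableSet_Ioo
  have : l ≠ 0 := hl.1.ne'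
  simp only [Pi.div_apply, id]
  field_simp

theorem abs_setIntegral_Ioi_mul_le (hg : Continuous g) (hA : ∀ l, |g l| ≤ A)
    (hD : ∀ l, |g l| ≤ D * |l|) (hlarge : IntegrableOn w (Ici 1))
    (hsmall : IntegrableOn (fun l ↦ w l * l) (Ioo 0 1)) :
    |∫ l in Ioi 0, w l * g l| ≤
      A * (∫ l in Ici 1, |w l|) + D * ∫ l in Ioo 0 1, |w l * l| := by
  have hint := integrableOn_Ioi_mul_of_abs_le hg hA hD hlarge hsmall
  have hbound_large : |∫ l in Ici 1, w l * g l| ≤ A * ∫ l in Ici 1, |w l| := by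
    rw [← integral_const_mul, ← Real.norm_eq_abs]
    refine norm_integral_le_of_norm_le (hlarge.abs.const_mul A) (ae_of_all _ fun l ↦ ?_)
    rw [norm_mul, mul_comm]
    exact mul_le_mul_of_nonneg_right (hA l) (abs_nonneg _)
  have hbound_small : |∫ l in Ioo 0 1, w l * g l| ≤ D * ∫ l in Ioo 0 1, |w l * l| := by
    rw [← integral_const_mul, ← Real.norm_eq_abs]
    refine norm_integral_le_of_norm_le (hsmall.abs.const_mul D) (ae_of_all _ fun l ↦ ?_)
    rw [norm_mul, abs_mul, mul_left_comm]
    exact mul_le_mul_of_nonneg_left (hD l) (abs_nonneg _)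
  rw [← Ioo_union_Ici_eq_Ioi zero_lt_one] at hint ⊢
  rw [setIntegral_union ((Iio_disjoint_Ici le_rfl).mono_left Ioo_subset_Iio_self)
    measurableSet_Ici hint.left_of_union hint.right_of_union, add_comm]
  exact (abs_add_le _ _).trans (add_le_add hbound_large hbound_small)

end SplitAtOne

section PowerLaw

variable {α : ℝ} {g F : ℝ → ℝ}

theorem rpow_neg_mul_self {l : ℝ} (hl : 0 < l) : l ^ (-α) * l = l ^ (1 - α) := by
  rw [sub_eq_neg_add, Real.rpow_add hl, Real.rpow_one]

theorem integrableOn_Ici_one_rpow_neg (hα : 1 < α) :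
    IntegrableOn (fun l : ℝ ↦ l ^ (-α)) (Ici 1) :=
  (integrableOn_Ici_iff_integrableOn_Ioi).2
    (integrableOn_Ioi_rpow_of_lt (neg_lt_neg hα) zero_lt_one)

theorem integrableOn_Ioo_rpow_neg_mul_self (hα : α < 2) :
    IntegrableOn (fun l : ℝ ↦ l ^ (-α) * l) (Ioo 0 1) :=
  ((intervalIntegral.integrableOn_Ioo_rpow_iff zero_lt_one).2 (by linarith)).congr_fun
    (fun _ hl ↦ (rpow_neg_mul_self hl.1).symm) measurableSet_Ioo

/-- The Lévy measure `l ^ (-1 - α) dl` on `(0, ∞)` of a one-sided `α`-stable law. -/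
noncomputable def stableLevyMeasure (α : ℝ) : Measure ℝ :=
  (volume.restrict (Ioi 0)).withDensity fun l ↦ ENNReal.ofReal (l ^ (-1 - α))

instance : SFinite (stableLevyMeasure α) := by
  unfold stableLevyMeasure
  infer_instance

theorem stableLevyMeasure_Ioi (hα : 0 < α) {l : ℝ} (hl : 0 < l) :
    stableLevyMeasure α (Ioi l) = ENNReal.ofReal (l ^ (-α) / α) := by
  have hnonneg : 0 ≤ᵐ[volume.restrict (Ioi l)] fun t : ℝ ↦ t ^ (-1 - α) := by
    filter_upwards [ae_restrict_mem measurableSet_Ioi] with t ht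
    exact Real.rpow_nonneg (hl.trans ht).le _
  rw [stableLevyMeasure, withDensity_apply _ measurableSet_Ioi,
    Measure.restrict_restrict_of_subset (Ioi_subset_Ioi hl.le),
    ← ofReal_integral_eq_lintegral_ofReal (integrableOn_Ioi_rpow_of_lt (by linarith) hl) hnonneg,
    integral_Ioi_rpow_of_lt (by linarith) hl, show -1 - α + 1 = -α by ring, neg_div_neg_eq]

theorem setIntegral_stableLevyMeasure (f : ℝ → ℝ) :
    ∫ l in Ioi 0, f l ∂stableLevyMeasure α = ∫ l in Ioi 0, f l * l ^ (-1 - α) := by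
  rw [stableLevyMeasure, setIntegral_withDensity_eq_setIntegral_toReal_smul (by fun_prop)
    (ae_of_all _ fun _ ↦ ENNReal.ofReal_lt_top) _ measurableSet_Ioi,
    Measure.restrict_restrict_of_subset Subset.rfl]
  refine setIntegral_congr_fun measurableSet_Ioi fun l hl ↦ ?_
  rw [ENNReal.toReal_ofReal (Real.rpow_nonneg (mem_Ioi.1 hl).le _), smul_eq_mul, mul_comm]

theorem setIntegral_Ioi_primitive_mul_rpow (hα : 0 < α) (hg : Continuous g)
    (hF : ∀ z, F z = ∫ l in (0)..z, g l)
    (hint : IntegrableOn (fun l ↦ l ^ (-α) * g l) (Ioi 0)) :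
    ∫ l in Ioi 0, F l * l ^ (-1 - α) = ∫ l in Ioi 0, l ^ (-α) / α * g l := by
  have htail {l : ℝ} (hl : l ∈ Ioi 0) :
      l ^ (-α) / α * g l = (stableLevyMeasure α).real (Ioi l) • g l := by
    rw [measureReal_def, stableLevyMeasure_Ioi hα hl, smul_eq_mul, ENNReal.toReal_ofReal
      (div_nonneg (Real.rpow_nonneg (mem_Ioi.1 hl).le _) hα.le)]
  have hint_tail : IntegrableOn (fun l ↦ (stableLevyMeasure α).real (Ioi l) • g l) (Ioi 0) :=
    IntegrableOn.congr_fun (hint.div_const α)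
      (fun l hl ↦ by rw [← htail hl, div_mul_eq_mul_div]) measurableSet_Ioi
  rw [← setIntegral_stableLevyMeasure]
  simp only [hF]
  rw [setIntegral_intervalIntegral_eq_setIntegral_measureReal_Ioi_smul hg.aestronglyMeasurable
    (fun l hl ↦ by simp only [stableLevyMeasure_Ioi hα hl, ne_eq, ENNReal.ofReal_ne_top,
      not_false_eq_true]) hint_tail]
  exact setIntegral_congr_fun measurableSet_Ioi fun l hl ↦ (htail hl).symm

end PowerLaw

section OneSided

variable {ν : Measure ℝ} {α c A D : ℝ} {e g F : ℝ → ℝ}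

theorem ae_measureReal_neg_Ioi_eq (hcdf : ∀ x < 0, ν.real (Iic x) = (c / α + e x) * |x| ^ (-α)) :
    ∀ᵐ l ∂volume.restrict (Ioi 0), ν.neg.real (Ioi l) = (c / α + e (-l)) * l ^ (-α) := by
  filter_upwards [ae_restrict_mem measurableSet_Ioi,
    meas_le_ae_eq_meas_lt ν.neg (volume.restrict (Ioi 0)) fun z ↦ z] with l hl hle_lt
  calc ν.neg.real (Ioi l)
      = ν.real (Iic (-l)) := by
        rw [measureReal_def, measureReal_def, ← neg_Ici, ← Measure.neg_apply]
        exact congrArg ENNReal.toReal hle_lt.symm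
    _ = (c / α + e (-l)) * l ^ (-α) := by
        rw [hcdf _ (neg_lt_zero.2 hl), abs_neg, abs_of_pos hl]

variable [IsFiniteMeasure ν]

theorem integrableOn_Ici_one_tailError (hα : 1 < α) (hν : IntegrableOn (fun z ↦ z) (Ioi 0) ν)
    (htail : ∀ᵐ l ∂volume.restrict (Ioi 0), ν.real (Ioi l) = (c / α + e l) * l ^ (-α)) :
    IntegrableOn (fun l ↦ e l * l ^ (-α)) (Ici 1) := by
  have hsub : Ici (1 : ℝ) ⊆ Ioi 0 := Ici_subset_Ioi.2 zero_lt_one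
  refine (((integrableOn_measureReal_Ioi hν).mono_set hsub).sub
    ((integrableOn_Ici_one_rpow_neg hα).const_mul (c / α))).congr ?_
  filter_upwards [ae_restrict_of_ae_restrict_of_subset hsub htail] with l hl
  rw [Pi.sub_apply, hl]
  ring

theorem integrableOn_Ioo_tailError_mul_self (hα : α < 2)
    (htail : ∀ᵐ l ∂volume.restrict (Ioi 0), ν.real (Ioi l) = (c / α + e l) * l ^ (-α)) :
    IntegrableOn (fun l ↦ e l * l ^ (-α) * l) (Ioo 0 1) := by
  have htail_anti : Antitone fun l ↦ ν.real (Ioi l) :=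
    fun _ _ hxy ↦ measureReal_mono (Ioi_subset_Ioi hxy)
  have hint : IntegrableOn (fun l ↦ ν.real (Ioi l) * l) (Ioo 0 1) :=
    ((htail_anti.locallyIntegrable.integrableOn_isCompact isCompact_Icc).mul_continuousOn
      continuousOn_id isCompact_Icc).mono_set Ioo_subset_Icc_self
  refine (hint.sub ((integrableOn_Ioo_rpow_neg_mul_self hα).const_mul (c / α))).congr ?_
  filter_upwards [ae_restrict_of_ae_restrict_of_subset Ioo_subset_Ioi_self htail] with l hl
  rw [Pi.sub_apply, hl]
  ring

theorem setIntegral_Ioi_sub_eq_setIntegral_tailError_mul (hα : α ∈ Ioo 1 2) (hg : Continuous g)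
    (hA : ∀ l, |g l| ≤ A) (hD : ∀ l, |g l| ≤ D * |l|) (hF : ∀ z, F z = ∫ l in (0)..z, g l)
    (hν : IntegrableOn (fun z ↦ z) (Ioi 0) ν)
    (htail : ∀ᵐ l ∂volume.restrict (Ioi 0), ν.real (Ioi l) = (c / α + e l) * l ^ (-α)) :
    (∫ z in Ioi 0, F z ∂ν) - c * ∫ l in Ioi 0, F l * l ^ (-1 - α) =
      ∫ l in Ioi 0, e l * l ^ (-α) * g l := by
  have hint_tail : IntegrableOn (fun l ↦ ν.real (Ioi l) • g l) (Ioi 0) :=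
    (integrableOn_measureReal_Ioi hν).mul_bdd hg.aestronglyMeasurable (ae_of_all _ hA)
  have hint_rpow : IntegrableOn (fun l ↦ l ^ (-α) * g l) (Ioi 0) :=
    integrableOn_Ioi_mul_of_abs_le hg hA hD (integrableOn_Ici_one_rpow_neg hα.1)
      (integrableOn_Ioo_rpow_neg_mul_self hα.2)
  have hlayer : ∫ z in Ioi 0, F z ∂ν = ∫ l in Ioi 0, ν.real (Ioi l) • g l := by
    simp only [hF]
    exact setIntegral_intervalIntegral_eq_setIntegral_measureReal_Ioi_smul hg.aestronglyMeasurable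
      (fun _ _ ↦ measure_ne_top _ _) hint_tail
  have hint_levy : IntegrableOn (fun l ↦ c * (l ^ (-α) / α * g l)) (Ioi 0) := by
    simp only [div_mul_eq_mul_div]
    exact (hint_rpow.div_const α).const_mul c
  rw [hlayer, setIntegral_Ioi_primitive_mul_rpow (zero_lt_one.trans hα.1) hg hF hint_rpow,
    ← integral_const_mul, ← integral_sub hint_tail hint_levy]
  refine integral_congr_ae ?_
  filter_upwards [htail] with l hl
  rw [hl, smul_eq_mul]
  ring

theorem abs_setIntegral_Ioi_sub_le (hα : α ∈ Ioo 1 2) (hg : Continuous g)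
    (hA : ∀ l, |g l| ≤ A) (hD : ∀ l, |g l| ≤ D * |l|) (hF : ∀ z, F z = ∫ l in (0)..z, g l)
    (hν : IntegrableOn (fun z ↦ z) (Ioi 0) ν)
    (htail : ∀ᵐ l ∂volume.restrict (Ioi 0), ν.real (Ioi l) = (c / α + e l) * l ^ (-α)) :
    |(∫ z in Ioi 0, F z ∂ν) - c * ∫ l in Ioi 0, F l * l ^ (-1 - α)| ≤
      A * (∫ l in Ici 1, |e l| * l ^ (-α)) + D * ∫ l in Ioo 0 1, |e l| / l ^ (α - 1) := by
  rw [setIntegral_Ioi_sub_eq_setIntegral_tailError_mul hα hg hA hD hF hν htail]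
  refine (abs_setIntegral_Ioi_mul_le hg hA hD (integrableOn_Ici_one_tailError hα.1 hν htail)
    (integrableOn_Ioo_tailError_mul_self hα.2 htail)).trans_eq ?_
  congr 2
  · refine setIntegral_congr_fun measurableSet_Ici fun l hl ↦ ?_
    rw [abs_mul, abs_of_nonneg (Real.rpow_nonneg (zero_le_one.trans (mem_Ici.1 hl)) _)]
  · refine setIntegral_congr_fun measurableSet_Ioo fun l hl ↦ ?_
    rw [mul_assoc, rpow_neg_mul_self hl.1, abs_mul, abs_of_nonneg (Real.rpow_nonneg hl.1.le _),
      ← neg_sub, Real.rpow_neg hl.1.le, div_eq_mul_inv]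

theorem abs_setIntegral_Iio_sub_le (hα : α ∈ Ioo 1 2) (hg : Continuous g)
    (hA : ∀ l, |g l| ≤ A) (hD : ∀ l, |g l| ≤ D * |l|) (hF : ∀ z, F z = ∫ l in (0)..z, g l)
    (hν : IntegrableOn (fun z ↦ z) (Iio 0) ν)
    (hcdf : ∀ x < 0, ν.real (Iic x) = (c / α + e x) * |x| ^ (-α)) :
    |(∫ z in Iio 0, F z ∂ν) - c * ∫ l in Iio 0, F l * |l| ^ (-1 - α)| ≤
      A * (∫ l in Iic (-1), |e l| * |l| ^ (-α)) + D * ∫ l in Ioo (-1) 0, |e l| / |l| ^ (α - 1) := by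
  have hF_neg (z : ℝ) : F (-z) = ∫ l in (0)..z, -g (-l) := by
    rw [hF, intervalIntegral.integral_neg, intervalIntegral.integral_comp_neg, neg_zero,
      intervalIntegral.integral_symm]
  have hν_neg : IntegrableOn (fun z ↦ z) (Ioi 0) ν.neg := by
    have hpre : MeasurableEquiv.neg ℝ ⁻¹' Ioi 0 = Iio 0 := by simp
    refine (integrableOn_map_equiv (MeasurableEquiv.neg ℝ)).2 ?_
    rw [hpre]
    exact hν.neg
  have : IsFiniteMeasure ν.neg := inferInstanceAs (IsFiniteMeasure (ν.map Neg.neg))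
  have hright := abs_setIntegral_Ioi_sub_le (F := fun z ↦ F (-z)) (g := fun l ↦ -g (-l))
    (A := A) (D := D) hα (by fun_prop) (fun l ↦ by simpa only [abs_neg] using hA (-l))
    (fun l ↦ by simpa only [abs_neg] using hD (-l)) hF_neg hν_neg (ae_measureReal_neg_Ioi_eq hcdf)
  have hleft_measure := setIntegral_comp_neg_measureNeg ν (Ioi 0) F
  have hleft_levy := setIntegral_neg_of_subset_Ioi measurableSet_Ioi Subset.rfl
    fun l t ↦ F l * t ^ (-1 - α)
  have hleft_large := setIntegral_neg_of_subset_Ioi measurableSet_Ici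
    (Ici_subset_Ioi.2 (zero_lt_one' ℝ)) fun l t ↦ |e l| * t ^ (-α)
  have hleft_small := setIntegral_neg_of_subset_Ioi measurableSet_Ioo
    (Ioo_subset_Ioi_self : Ioo (0 : ℝ) 1 ⊆ Ioi 0) fun l t ↦ |e l| / t ^ (α - 1)
  rw [neg_Ioi, neg_zero] at hleft_measure hleft_levy
  rw [neg_Ici] at hleft_large
  rw [neg_Ioo, neg_zero] at hleft_small
  rwa [hleft_levy, hleft_large, hleft_small, ← hleft_measure]

end OneSided

/-- The cumulative distribution function of `μ` is `(c₁ / α + e₁ x) |x| ^ (-α)` on `(-∞, 0)` and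
`1 - (c₂ / α + e₂ x) x ^ (-α)` on `(0, ∞)`. The relative errors `e₁` and `e₂` are arbitrary
functions: their smallness enters through the integrals of `|e₁|` and `|e₂|` in the estimates. -/
structure HasPowerLawTails (μ : Measure ℝ) (α c₁ c₂ : ℝ) (e₁ e₂ : ℝ → ℝ) : Prop where
  measureReal_Iic_of_neg : ∀ x < 0, μ.real (Iic x) = (c₁ / α + e₁ x) * |x| ^ (-α)
  measureReal_Iic_of_pos : ∀ x > 0, μ.real (Iic x) = 1 - (c₂ / α + e₂ x) * x ^ (-α)

namespace HasPowerLawTails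

variable {μ : Measure ℝ} {α c₁ c₂ A D : ℝ} {e₁ e₂ g F : ℝ → ℝ}

theorem map_const_mul (hμ : HasPowerLawTails μ α c₁ c₂ e₁ e₂) {h : ℝ} (hh : 0 < h) :
    HasPowerLawTails (μ.map (h * ·)) α (h ^ α * c₁) (h ^ α * c₂)
      (fun x ↦ h ^ α * e₁ (h⁻¹ * x)) (fun x ↦ h ^ α * e₂ (h⁻¹ * x)) := by
  have hcdf (x : ℝ) : (μ.map (h * ·)).real (Iic x) = μ.real (Iic (h⁻¹ * x)) := by
    rw [map_measureReal_apply (measurable_const_mul h) measurableSet_Iic,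
      preimage_const_mul_Iic₀ _ hh, div_eq_inv_mul]
  have hscale {y : ℝ} (hy : 0 ≤ y) : (h⁻¹ * y) ^ (-α) = h ^ α * y ^ (-α) := by
    rw [Real.mul_rpow (inv_nonneg.2 hh.le) hy, Real.inv_rpow hh.le, Real.rpow_neg hh.le, inv_inv]
  constructor
  · intro x hx
    rw [hcdf, hμ.measureReal_Iic_of_neg _ (mul_neg_of_pos_of_neg (inv_pos.2 hh) hx), abs_mul,
      abs_of_pos (inv_pos.2 hh), hscale (abs_nonneg x)]
    ring
  · intro x hx
    rw [hcdf, hμ.measureReal_Iic_of_pos _ (mul_pos (inv_pos.2 hh) hx), hscale hx.le]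
    ring

variable [IsProbabilityMeasure μ]

theorem measureReal_Ioi (hμ : HasPowerLawTails μ α c₁ c₂ e₁ e₂) {x : ℝ} (hx : 0 < x) :
    μ.real (Ioi x) = (c₂ / α + e₂ x) * x ^ (-α) := by
  rw [← compl_Iic, probReal_compl_eq_one_sub measurableSet_Iic, hμ.measureReal_Iic_of_pos x hx,
    sub_sub_cancel]

theorem abs_integral_sub_le (hμ : HasPowerLawTails μ α c₁ c₂ e₁ e₂) (hα : α ∈ Ioo 1 2)
    (hint : Integrable (fun z ↦ z) μ) (hg : Continuous g) (hA : ∀ l, |g l| ≤ A)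
    (hD : ∀ l, |g l| ≤ D * |l|) (hF : ∀ z, F z = ∫ l in (0)..z, g l) (hFint : Integrable F μ) :
    |(∫ z, F z ∂μ) - (c₁ * (∫ l in Iio 0, F l * |l| ^ (-1 - α)) +
        c₂ * ∫ l in Ioi 0, F l * l ^ (-1 - α))| ≤
      A * ((∫ l in Iic (-1), |e₁ l| * |l| ^ (-α)) + ∫ l in Ici 1, |e₂ l| * l ^ (-α)) +
        D * ((∫ l in Ioo (-1) 0, |e₁ l| / |l| ^ (α - 1)) +
          ∫ l in Ioo 0 1, |e₂ l| / l ^ (α - 1)) := by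
  have hleft := abs_setIntegral_Iio_sub_le hα hg hA hD hF hint.integrableOn
    hμ.measureReal_Iic_of_neg
  have hright := abs_setIntegral_Ioi_sub_le hα hg hA hD hF hint.integrableOn
    ((ae_restrict_mem measurableSet_Ioi).mono fun _ ↦ hμ.measureReal_Ioi)
  have hsplit : ∫ z, F z ∂μ = (∫ z in Iio 0, F z ∂μ) + ∫ z in Ioi 0, F z ∂μ := by
    have hF_zero : F 0 = 0 := by rw [hF, intervalIntegral.integral_same]
    have hIic : ∫ z in Iic 0, F z ∂μ = ∫ z in Iio 0, F z ∂μ :=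
      setIntegral_eq_of_subset_of_forall_sdiff_eq_zero measurableSet_Iic Iio_subset_Iic_self
        fun z hz ↦ (le_antisymm hz.1 (not_lt.1 hz.2) : z = 0) ▸ hF_zero
    rw [← hIic, intervalIntegral.integral_Iic_add_Ioi hFint.integrableOn hFint.integrableOn]
  rw [hsplit, add_sub_add_comm]
  linarith [abs_add_le ((∫ z in Iio 0, F z ∂μ) - c₁ * ∫ l in Iio 0, F l * |l| ^ (-1 - α))
    ((∫ z in Ioi 0, F z ∂μ) - c₂ * ∫ l in Ioi 0, F l * l ^ (-1 - α))]

end HasPowerLawTails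

section TaylorRemainder

/-- The first order Taylor remainder `δ_l φ (x)` of `φ` at `x`. -/
noncomputable def taylorRemainder (φ : ℝ → ℝ) (x l : ℝ) : ℝ :=
  φ (x + l) - φ x - deriv φ x * l

/-- The generator of the `α`-stable Lévy process whose Lévy density is `c₁ |l| ^ (-1 - α)` for
`l < 0` and `c₂ l ^ (-1 - α)` for `l > 0`, compensated at all jump sizes as `1 < α` allows. -/
noncomputable def stableGenerator (α c₁ c₂ : ℝ) (φ : ℝ → ℝ) (x : ℝ) : ℝ :=
  c₁ * (∫ l in Iio 0, taylorRemainder φ x l * |l| ^ (-1 - α)) +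
    c₂ * ∫ l in Ioi 0, taylorRemainder φ x l * l ^ (-1 - α)

theorem mul_stableGenerator (s α c₁ c₂ : ℝ) (φ : ℝ → ℝ) (x : ℝ) :
    s * stableGenerator α c₁ c₂ φ x = stableGenerator α (s * c₁) (s * c₂) φ x := by
  simp only [stableGenerator, mul_add, mul_assoc]

variable {φ : ℝ → ℝ} {A D : ℝ≥0} {μ : Measure ℝ}

theorem taylorRemainder_eq_intervalIntegral (hφ : Differentiable ℝ φ)
    (hφ' : Continuous (deriv φ)) (x z : ℝ) :
    taylorRemainder φ x z = ∫ l in (0)..z, (deriv φ (x + l) - deriv φ x) := by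
  have hderiv (l : ℝ) : HasDerivAt (taylorRemainder φ x) (deriv φ (x + l) - deriv φ x) l := by
    have hlinear : HasDerivAt (fun l ↦ deriv φ x * l) (deriv φ x) l := by
      simpa using (hasDerivAt_id l).const_mul (deriv φ x)
    exact (((hφ (x + l)).hasDerivAt.comp_const_add x l).sub_const (φ x)).sub hlinear
  rw [intervalIntegral.integral_eq_sub_of_hasDerivAt (fun l _ ↦ hderiv l)
    (Continuous.intervalIntegrable (by fun_prop) _ _)]
  simp [taylorRemainder]

theorem integrable_comp_of_lipschitzWith [IsFiniteMeasure μ] {f : ℝ → ℝ}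
    (hφ : LipschitzWith A φ) (hf : Integrable f μ) : Integrable (fun z ↦ φ (f z)) μ := by
  have hdiff : Integrable (fun z ↦ φ (f z) - φ 0) μ := by
    refine (hf.norm.const_mul A).mono' ?_ (ae_of_all _ fun z ↦ ?_)
    · exact (hφ.continuous.comp_aestronglyMeasurable hf.1).sub aestronglyMeasurable_const
    · simpa using hφ.norm_sub_le (f z) 0
  exact (hdiff.add (integrable_const (φ 0))).congr (ae_of_all _ fun z ↦ sub_add_cancel _ _)

theorem integrable_taylorRemainder [IsFiniteMeasure μ] (hφ : LipschitzWith A φ)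
    (hμ : Integrable (fun z ↦ z) μ) (x : ℝ) : Integrable (taylorRemainder φ x) μ :=
  ((integrable_comp_of_lipschitzWith hφ ((integrable_const x).add hμ)).sub
    (integrable_const _)).sub (hμ.const_mul _)

theorem integral_taylorRemainder_of_centered [IsProbabilityMeasure μ] (hφ : LipschitzWith A φ)
    (hμ : Integrable (fun z ↦ z) μ) (hmean : ∫ z, z ∂μ = 0) (x : ℝ) :
    ∫ z, taylorRemainder φ x z ∂μ = (∫ z, φ (x + z) ∂μ) - φ x := by
  have hint : Integrable (fun z ↦ φ (x + z)) μ :=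
    integrable_comp_of_lipschitzWith hφ ((integrable_const x).add hμ)
  calc ∫ z, taylorRemainder φ x z ∂μ
      = (∫ z, (φ (x + z) - φ x) ∂μ) - ∫ z, deriv φ x * z ∂μ :=
        integral_sub (hint.sub (integrable_const _)) (hμ.const_mul _)
    _ = (∫ z, φ (x + z) ∂μ) - φ x := by
        rw [integral_sub hint (integrable_const _), integral_const_mul, hmean, mul_zero, sub_zero,
          integral_const, probReal_univ, one_smul]

theorem HasPowerLawTails.abs_integral_comp_add_sub_stableGenerator_le [IsProbabilityMeasure μ]
    {α c₁ c₂ : ℝ} {e₁ e₂ : ℝ → ℝ} (hμ : HasPowerLawTails μ α c₁ c₂ e₁ e₂) (hα : α ∈ Ioo 1 2)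
    (hint : Integrable (fun z ↦ z) μ) (hmean : ∫ z, z ∂μ = 0) (hφ : Differentiable ℝ φ)
    (hA : LipschitzWith A φ) (hD : LipschitzWith D (deriv φ)) (x : ℝ) :
    |(∫ z, φ (x + z) ∂μ) - φ x - stableGenerator α c₁ c₂ φ x| ≤
      2 * A * ((∫ l in Iic (-1), |e₁ l| * |l| ^ (-α)) + ∫ l in Ici 1, |e₂ l| * l ^ (-α)) +
        D * ((∫ l in Ioo (-1) 0, |e₁ l| / |l| ^ (α - 1)) +
          ∫ l in Ioo 0 1, |e₂ l| / l ^ (α - 1)) := by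
  have hφ' : Continuous (deriv φ) := hD.continuous
  have hA_deriv (y : ℝ) : |deriv φ y| ≤ A := norm_deriv_le_of_lipschitz hA
  have hbound (l : ℝ) : |deriv φ (x + l) - deriv φ x| ≤ 2 * A :=
    (abs_sub _ _).trans (by linarith [hA_deriv (x + l), hA_deriv x])
  have hlip (l : ℝ) : |deriv φ (x + l) - deriv φ x| ≤ D * |l| := by
    simpa using hD.norm_sub_le (x + l) x
  rw [← integral_taylorRemainder_of_centered hA hint hmean]
  exact hμ.abs_integral_sub_le hα hint (by fun_prop) hbound hlip
    (taylorRemainder_eq_intervalIntegral hφ hφ' x) (integrable_taylorRemainder hA hint x)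

end TaylorRemainder

theorem HasPowerLawTails.abs_integral_comp_add_mul_sub_stableGenerator_le {μ : Measure ℝ}
    [IsProbabilityMeasure μ] {α c₁ c₂ s ε : ℝ} {e₁ e₂ φ : ℝ → ℝ} {A D : ℝ≥0}
    (hμ : HasPowerLawTails μ α c₁ c₂ e₁ e₂) (hα : α ∈ Ioo 1 2) (hint : Integrable (fun z ↦ z) μ)
    (hmean : ∫ z, z ∂μ = 0) (hφ : Differentiable ℝ φ) (hA : LipschitzWith A φ)
    (hD : LipschitzWith D (deriv φ)) (hs : 0 < s)
    (h₁_large : ∫ l in Iic (-1), |e₁ ((s ^ (1 / α))⁻¹ * l)| * |l| ^ (-α) ≤ ε)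
    (h₂_large : ∫ l in Ici 1, |e₂ ((s ^ (1 / α))⁻¹ * l)| * l ^ (-α) ≤ ε)
    (h₁_small : ∫ l in Ioo (-1) 0, |e₁ ((s ^ (1 / α))⁻¹ * l)| / |l| ^ (α - 1) ≤ ε)
    (h₂_small : ∫ l in Ioo 0 1, |e₂ ((s ^ (1 / α))⁻¹ * l)| / l ^ (α - 1) ≤ ε) (x : ℝ) :
    |(∫ z, φ (x + s ^ (1 / α) * z) ∂μ) - φ x - s * stableGenerator α c₁ c₂ φ x| ≤
      s * ((4 * A + 2 * D) * ε) := by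
  set h := s ^ (1 / α) with hh_def
  have hh : 0 < h := Real.rpow_pos_of_pos hs _
  have hhα : h ^ α = s := by
    rw [hh_def, one_div, Real.rpow_inv_rpow hs.le (zero_lt_one.trans hα.1).ne']
  have hmeas : AEMeasurable (h * ·) μ := (measurable_const_mul h).aemeasurable
  have : IsProbabilityMeasure (μ.map (h * ·)) := Measure.isProbabilityMeasure_map hmeas
  have hint_map : Integrable (fun z ↦ z) (μ.map (h * ·)) :=
    (integrable_map_measure aestronglyMeasurable_id hmeas).2 (hint.const_mul h)
  have hmean_map : ∫ z, z ∂μ.map (h * ·) = 0 :=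
    (integral_map hmeas aestronglyMeasurable_id).trans
      ((integral_const_mul h _).trans (by rw [hmean, mul_zero]))
  have hmap : ∫ z, φ (x + z) ∂μ.map (h * ·) = ∫ z, φ (x + h * z) ∂μ :=
    integral_map hmeas (hA.continuous.comp (continuous_const_add x)).aestronglyMeasurable
  have hbound := (hμ.map_const_mul hh).abs_integral_comp_add_sub_stableGenerator_le hα hint_map
    hmean_map hφ hA hD x
  simp only [hhα, abs_mul, abs_of_pos hs, mul_assoc, mul_div_assoc, integral_const_mul] at hbound
  rw [hmap, ← mul_stableGenerator] at hbound
  calc |(∫ z, φ (x + h * z) ∂μ) - φ x - s * stableGenerator α c₁ c₂ φ x|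
      ≤ 2 * (A * (s * ε + s * ε)) + D * (s * ε + s * ε) := hbound.trans (by gcongr)
    _ = s * ((4 * A + 2 * D) * ε) := by ring

theorem abs_ciSup_sub_ciSup_le {ι : Type*} [Nonempty ι] {a b : ι → ℝ} {C : ℝ}
    (ha : BddAbove (range a)) (hab : ∀ i, |a i - b i| ≤ C) : |(⨆ i, a i) - ⨆ i, b i| ≤ C := by
  have hb : BddAbove (range b) := by
    obtain ⟨M, hM⟩ := ha
    refine ⟨M + C, forall_mem_range.2 fun i ↦ ?_⟩
    linarith [(abs_le.1 (hab i)).1, hM (mem_range_self i)]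
  rw [abs_sub_le_iff, sub_le_iff_le_add, sub_le_iff_le_add]
  constructor
  · exact ciSup_le fun i ↦ by linarith [(abs_le.1 (hab i)).2, le_ciSup hb i]
  · exact ciSup_le fun i ↦ by linarith [(abs_le.1 (hab i)).1, le_ciSup ha i]

theorem lipschitzWith_toNNReal_iSup_abs_deriv {f : ℝ → ℝ} (hf : Differentiable ℝ f)
    (hbdd : BddAbove (range fun y ↦ |deriv f y|)) :
    LipschitzWith (⨆ y, |deriv f y|).toNNReal f :=
  lipschitzWith_of_nnnorm_deriv_le hf fun y ↦
    NNReal.le_toNNReal_of_coe_le (le_ciSup hbdd y)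

theorem stmt_7_general {ι : Type*} [Nonempty ι] {α : ℝ} (hα : α ∈ Ioo 1 2)
    (μ : ι → Measure ℝ) [∀ k, IsProbabilityMeasure (μ k)] (c₁ c₂ : ι → ℝ) (β₁ β₂ : ι → ℝ → ℝ)
    (hμ : ∀ k, HasPowerLawTails (μ k) α (c₁ k) (c₂ k) (β₁ k) (β₂ k))
    (hC1 : ∀ k, Integrable (fun z ↦ z) (μ k) ∧ ∫ z, z ∂μ k = 0) (q₀ C : ℝ)
    (hC2 : ∀ k, ∀ r : ℝ, 1 ≤ r →
      (∫ x in Iic (-1), |β₁ k (r ^ (1 / α) * x)| * |x| ^ (-α)) ≤ C * r ^ (-q₀) ∧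
      (∫ x in Ici 1, |β₂ k (r ^ (1 / α) * x)| * x ^ (-α)) ≤ C * r ^ (-q₀) ∧
      (∫ x in Ioo (-1) 0, |β₁ k (r ^ (1 / α) * x)| / |x| ^ (α - 1)) ≤ C * r ^ (-q₀) ∧
      (∫ x in Ioo 0 1, |β₂ k (r ^ (1 / α) * x)| / x ^ (α - 1)) ≤ C * r ^ (-q₀))
    {φ : ℝ → ℝ} (hφ : Differentiable ℝ φ) (hφ_bdd : BddAbove (range φ)) {A D : ℝ≥0}
    (hA : LipschitzWith A φ) (hD : LipschitzWith D (deriv φ)) {s : ℝ} (hs : s ∈ Ioc 0 1) (x : ℝ) :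
    1 / s * |(⨆ k, ∫ z, φ (x + s ^ (1 / α) * z) ∂μ k) - φ x -
        s * ⨆ k, stableGenerator α (c₁ k) (c₂ k) φ x| ≤
      (4 * C * A + 2 * C * D) * s ^ q₀ := by
  obtain ⟨hs_pos, hs_le⟩ := hs
  have hbound (k : ι) :
      |(∫ z, φ (x + s ^ (1 / α) * z) ∂μ k) - φ x - s * stableGenerator α (c₁ k) (c₂ k) φ x| ≤
        s * ((4 * A + 2 * D) * (C * s ^ q₀)) := by
    have hC2k := hC2 k s⁻¹ (one_le_inv_iff₀.2 ⟨hs_pos, hs_le⟩)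
    simp only [Real.inv_rpow hs_pos.le, Real.rpow_neg hs_pos.le, inv_inv] at hC2k
    obtain ⟨h₁_large, h₂_large, h₁_small, h₂_small⟩ := hC2k
    exact (hμ k).abs_integral_comp_add_mul_sub_stableGenerator_le hα (hC1 k).1 (hC1 k).2 hφ hA hD
      hs_pos h₁_large h₂_large h₁_small h₂_small x
  obtain ⟨M, hM⟩ := hφ_bdd
  have hle (k : ι) : ∫ z, φ (x + s ^ (1 / α) * z) ∂μ k ≤ M := by
    have hint : Integrable (fun z ↦ φ (x + s ^ (1 / α) * z)) (μ k) :=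
      integrable_comp_of_lipschitzWith hA ((integrable_const x).add ((hC1 k).1.const_mul _))
    simpa using integral_mono hint (integrable_const M) fun z ↦ hM (mem_range_self _)
  rw [Real.mul_iSup_of_nonneg hs_pos.le, ciSup_sub ⟨M, forall_mem_range.2 hle⟩, one_div,
    inv_mul_le_iff₀ hs_pos]
  exact (abs_ciSup_sub_ciSup_le ⟨M - φ x, forall_mem_range.2 fun k ↦ sub_le_sub_right (hle k) _⟩
    hbound).trans_eq (by ring)

/-- Consistency estimate (assumption (ii)) for the concrete family of
distributions in the case `α ∈ (1,2)`. -/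
theorem stmt_7 (α : ℝ) (hα : α ∈ Set.Ioo (1:ℝ) 2)
    (Λl Λu : ℝ) (hΛl : 0 < Λl) (hΛ : Λl < Λu)
    (μ : {k : ℝ × ℝ // k ∈ Set.Ioo Λl Λu ×ˢ Set.Ioo Λl Λu} → Measure ℝ)
    (hμ : ∀ k, IsProbabilityMeasure (μ k))
    (β₁ β₂ β₁' β₂' : {k : ℝ × ℝ // k ∈ Set.Ioo Λl Λu ×ˢ Set.Ioo Λl Λu} → ℝ → ℝ)
    (hβ₁d : ∀ k, ∀ x < (0:ℝ), HasDerivAt (β₁ k) (β₁' k x) x)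
    (hβ₂d : ∀ k, ∀ x > (0:ℝ), HasDerivAt (β₂ k) (β₂' k x) x)
    (hβ₁c : ∀ k, ContinuousOn (β₁ k) (Set.Iic 0) ∧ ContinuousOn (β₁' k) (Set.Iio 0))
    (hβ₂c : ∀ k, ContinuousOn (β₂ k) (Set.Ici 0) ∧ ContinuousOn (β₂' k) (Set.Ioi 0))
    (hβ₁lim : ∀ k, Tendsto (β₁ k) atBot (nhds 0))
    (hβ₂lim : ∀ k, Tendsto (β₂ k) atTop (nhds 0))
    (hcdf₁ : ∀ k, ∀ x < (0:ℝ),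
      (μ k (Set.Iic x)).toReal = (k.1.1 / α + β₁ k x) * |x| ^ (-α))
    (hcdf₂ : ∀ k, ∀ x > (0:ℝ),
      (μ k (Set.Iic x)).toReal = 1 - (k.1.2 / α + β₂ k x) * x ^ (-α))
    -- assumption (C1): mean zero
    (hC1 : ∀ k, Integrable (fun z : ℝ => z) (μ k) ∧ (∫ z, z ∂(μ k)) = 0)
    (q₀ Cβ : ℝ) (hq₀ : 0 < q₀) (hCβ : 0 < Cβ)
    -- assumption (C2)
    (hC2 : ∀ k, ∀ r : ℝ, 1 ≤ r →
      |β₁ k (-(r ^ (1/α)))| ≤ Cβ * r ^ (-q₀) ∧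
      |β₂ k (r ^ (1/α))| ≤ Cβ * r ^ (-q₀) ∧
      (∫ x in Set.Iic (-1:ℝ), |β₁ k (r ^ (1/α) * x)| * |x| ^ (-α)) ≤ Cβ * r ^ (-q₀) ∧
      (∫ x in Set.Ici (1:ℝ), |β₂ k (r ^ (1/α) * x)| * x ^ (-α)) ≤ Cβ * r ^ (-q₀) ∧
      (∫ x in Set.Ioo (-1:ℝ) 0, |β₁ k (r ^ (1/α) * x)| / |x| ^ (α - 1)) ≤ Cβ * r ^ (-q₀) ∧
      (∫ x in Set.Ioo (0:ℝ) 1, |β₂ k (r ^ (1/α) * x)| / x ^ (α - 1)) ≤ Cβ * r ^ (-q₀))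
    -- uniform bounds
    (hC2' : ∀ k,
      |β₁ k (-1)| ≤ Cβ ∧ |β₂ k 1| ≤ Cβ ∧
      (∫ l in Set.Ioo (0:ℝ) 1, |α * β₁ k (-l) + β₁' k (-l) * l| * l ^ (1 - α)) ≤ Cβ ∧
      (∫ l in Set.Ioo (0:ℝ) 1, |α * β₂ k l - β₂' k l * l| * l ^ (1 - α)) ≤ Cβ) :
    ∀ φ : ℝ → ℝ, ContDiff ℝ 3 φ →
      (∃ M, ∀ x, |φ x| ≤ M ∧ |deriv φ x| ≤ M ∧ |deriv (deriv φ) x| ≤ M ∧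
        |deriv (deriv (deriv φ)) x| ≤ M) →
      ∀ s ∈ Set.Ioc (0:ℝ) 1, ∀ x : ℝ,
        (1 / s) *
          |(⨆ k, ∫ z, φ (x + s ^ (1/α) * z) ∂(μ k)) - φ x -
            s * (⨆ k : {k : ℝ × ℝ // k ∈ Set.Ioo Λl Λu ×ˢ Set.Ioo Λl Λu}, (k.1.1 * (∫ l in Set.Iio (0:ℝ),
                (φ (x + l) - φ x - deriv φ x * l) * |l| ^ (-1 - α)) +
              k.1.2 * ∫ l in Set.Ioi (0:ℝ),
                (φ (x + l) - φ x - deriv φ x * l) * l ^ (-1 - α)))| ≤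
        (16 * Cβ * (⨆ y, |deriv φ y|) + 2 * Cβ * (⨆ y, |deriv (deriv φ) y|)) * s ^ q₀ +
          4 * Cβ * (⨆ y, |deriv (deriv φ) y|) * s ^ ((2 - α) / α) := by
  intro φ hφ ⟨M, hM⟩ s hs x
  obtain ⟨c, hc⟩ := exists_between hΛ
  have : Nonempty {k : ℝ × ℝ // k ∈ Ioo Λl Λu ×ˢ Ioo Λl Λu} := ⟨⟨(c, c), hc, hc⟩⟩
  have hA := lipschitzWith_toNNReal_iSup_abs_deriv (hφ.differentiable (by norm_num))
    ⟨M, forall_mem_range.2 fun y ↦ (hM y).2.1⟩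
  have hD := lipschitzWith_toNNReal_iSup_abs_deriv (f := deriv φ)
    ((hφ.iterate_deriv' 2 1).differentiable (by norm_num))
    ⟨M, forall_mem_range.2 fun y ↦ (hM y).2.2.1⟩
  have hbound := stmt_7_general hα μ (fun k ↦ k.1.1) (fun k ↦ k.1.2) β₁ β₂
    (fun k ↦ ⟨hcdf₁ k, hcdf₂ k⟩) hC1 q₀ Cβ (fun k r hr ↦ (hC2 k r hr).2.2)
    (hφ.differentiable (by norm_num)) ⟨M, forall_mem_range.2 fun y ↦ (abs_le.1 (hM y).1).2⟩
    hA hD hs x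
  have hA_nonneg : 0 ≤ ⨆ y, |deriv φ y| := Real.iSup_nonneg fun y ↦ abs_nonneg _
  have hD_nonneg : 0 ≤ ⨆ y, |deriv (deriv φ) y| := Real.iSup_nonneg fun y ↦ abs_nonneg _
  rw [Real.coe_toNNReal _ hA_nonneg, Real.coe_toNNReal _ hD_nonneg] at hbound
  have hs_pos : 0 < s := hs.1
  calc _ ≤ (4 * Cβ * (⨆ y, |deriv φ y|) + 2 * Cβ * ⨆ y, |deriv (deriv φ) y|) * s ^ q₀ := hbound
    _ ≤ (16 * Cβ * (⨆ y, |deriv φ y|) + 2 * Cβ * ⨆ y, |deriv (deriv φ) y|) * s ^ q₀ := by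
        gcongr
        norm_num
    _ ≤ _ := le_add_of_nonneg_right (by positivity)
end

section
/- Let α ∈ (1,2), s ∈ (0,1], and let φ : ℝ → ℝ be continuously differentiable with φ and φ′ bounded. Let β : (0,∞) → ℝ be a bounded continuously differentiable function with β(y) → 0 as y → ∞, such that ∫_1^∞ |β(s^{−1/α} λ)| λ^{−α} dλ < ∞ and the function λ ↦ (α β(s^{−1/α} λ) − β′(s^{−1/α} λ) s^{−1/α} λ) λ^{−α−1} δ_λφ(x) is Lebesgue integrable on (1,∞), where δ_λφ(x) := φ(x+λ) − φ(x) − φ′(x) λ. Then for every x ∈ ℝ, | ∫_1^∞ δ_λφ(x) (α β(s^{−1/α} λ) − β′(s^{−1/α} λ) s^{−1/α} λ) λ^{−α−1} dλ | ≤ 2 ‖φ′‖_∞ ( |β(s^{−1/α})| + ∫_1^∞ |β(s^{−1/α} λ)| λ^{−α} dλ ). -/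
open MeasureTheory Set Filter

/-!
With `c = s^(-1/α)`, integrate by parts against `v(λ) = -β(cλ) λ^(-α)`, whose derivative is the
kernel of the integral. The remainder `δ_λφ(x)` vanishes at `λ = 0` and has `λ`-derivative
`φ'(x + λ) - φ'(x)`, bounded by `2‖φ'‖_∞`; this controls both the boundary term at `λ = 1` and
the new integral.

The boundary term at infinity is zero: the product `δ_λφ(x) v(λ)` has an integrable derivative,
hence a limit `L`, and is `O(λ |v(λ)|)` with `v` integrable, so `L ≠ 0` would make `1/λ` integrable
at infinity.
-/

open scoped Topology

section IntegrationByParts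

theorem eq_zero_of_tendsto_of_isBigO_smul_integrableOn {E F : Type*} [NormedAddCommGroup E]
    [NormedAddCommGroup F] [NormedSpace ℝ F] {f : ℝ → E} {g : ℝ → F} {a : ℝ} {L : E}
    (hf : Tendsto f atTop (𝓝 L)) (hfg : f =O[atTop] fun t ↦ t • g t)
    (hg : IntegrableOn g (Ioi a)) : L = 0 := by
  by_contra hL
  have one_isBigO : (fun _ ↦ (1 : ℝ)) =O[atTop] f :=
    (Asymptotics.isBigO_const_left_iff_pos_le_norm one_ne_zero).2
      ⟨‖L‖ / 2, by positivity, hf.norm.eventually_const_le (half_lt_self (by positivity))⟩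
  have deriv_log_isBigO : deriv Real.log =O[atTop] g := by
    refine ((Asymptotics.isBigO_refl (fun t : ℝ ↦ t⁻¹) atTop).smul
      (one_isBigO.trans hfg)).congr' ?_ ?_
    · exact .of_forall fun t ↦ by simp
    · filter_upwards [eventually_ne_atTop 0] with t ht
      exact inv_smul_smul₀ ht (g t)
  refine not_integrableOn_of_tendsto_norm_atTop_of_deriv_isBigO_filter atTop (Ioi_mem_atTop a)
    ?_ (tendsto_norm_atTop_atTop.comp Real.tendsto_log_atTop) deriv_log_isBigO hg
  filter_upwards [eventually_ne_atTop 0] with t ht using Real.differentiableAt_log ht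

theorem isBigO_id_atTop_of_norm_deriv_le {E : Type*} [NormedAddCommGroup E] [NormedSpace ℝ E]
    {u u' : ℝ → E} {a C : ℝ} (hu : ∀ t ∈ Ici a, HasDerivAt u (u' t) t)
    (hC : ∀ t ∈ Ici a, ‖u' t‖ ≤ C) : u =O[atTop] (id : ℝ → ℝ) := by
  have increment_isBigO : (fun t ↦ u t - u a) =O[atTop] fun t ↦ t - a := by
    refine .of_bound C ?_
    filter_upwards [eventually_ge_atTop a] with t ht
    exact (convex_Ici a).norm_image_sub_le_of_norm_hasDerivWithin_le
      (fun r hr ↦ (hu r hr).hasDerivWithinAt) hC self_mem_Ici ht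
  have shift_isBigO : (fun t ↦ t - a) =O[atTop] (id : ℝ → ℝ) :=
    (Asymptotics.isBigO_refl id atTop).sub (Asymptotics.isLittleO_const_id_atTop a).isBigO
  simpa using (increment_isBigO.trans shift_isBigO).add
    (Asymptotics.isLittleO_const_id_atTop (u a)).isBigO

variable {A : Type*} [NormedRing A] [NormedAlgebra ℝ A] [CompleteSpace A]
  {u u' v v' : ℝ → A} {a C : ℝ}

theorem integrableOn_deriv_mul_of_norm_le (hu : ∀ t ∈ Ioi a, HasDerivAt u (u' t) t)
    (hC : ∀ t ∈ Ioi a, ‖u' t‖ ≤ C) (hv : IntegrableOn v (Ioi a)) :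
    IntegrableOn (u' * v) (Ioi a) := by
  have u'_measurable : AEStronglyMeasurable u' (volume.restrict (Ioi a)) :=
    (stronglyMeasurable_deriv u).aestronglyMeasurable.congr <|
      (ae_restrict_mem measurableSet_Ioi).mono fun t ht ↦ (hu t ht).deriv
  exact hv.bdd_mul u'_measurable ((ae_restrict_mem measurableSet_Ioi).mono hC)

theorem tendsto_mul_atTop_zero_of_integrableOn (hu : ∀ t ∈ Ici a, HasDerivAt u (u' t) t)
    (hC : ∀ t ∈ Ici a, ‖u' t‖ ≤ C) (hv : ∀ t ∈ Ici a, HasDerivAt v (v' t) t)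
    (hv_int : IntegrableOn v (Ioi a)) (huv' : IntegrableOn (u * v') (Ioi a)) :
    Tendsto (u * v) atTop (𝓝 0) := by
  have hu'v := integrableOn_deriv_mul_of_norm_le (fun t ht ↦ hu t (Ioi_subset_Ici_self ht))
    (fun t ht ↦ hC t (Ioi_subset_Ici_self ht)) hv_int
  have tendsto_lim : Tendsto (u * v) atTop (𝓝 (limUnder atTop (u * v))) :=
    tendsto_limUnder_of_hasDerivAt_of_integrableOn_Ioi
      (fun t ht ↦ (hu t (Ioi_subset_Ici_self ht)).mul (hv t (Ioi_subset_Ici_self ht)))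
      (hu'v.add huv')
  have product_isBigO : (u * v) =O[atTop] fun t ↦ t • ‖v t‖ :=
    (isBigO_id_atTop_of_norm_deriv_le hu hC).mul (Asymptotics.isBigO_refl v atTop).norm_right
  rwa [eq_zero_of_tendsto_of_isBigO_smul_integrableOn tendsto_lim product_isBigO hv_int.norm]
    at tendsto_lim

theorem norm_integral_Ioi_mul_deriv_le (hu : ∀ t ∈ Ici a, HasDerivAt u (u' t) t)
    (hC : ∀ t ∈ Ici a, ‖u' t‖ ≤ C) (hv : ∀ t ∈ Ici a, HasDerivAt v (v' t) t)
    (hv_int : IntegrableOn v (Ioi a)) (huv' : IntegrableOn (u * v') (Ioi a)) :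
    ‖∫ t in Ioi a, u t * v' t‖ ≤ ‖u a‖ * ‖v a‖ + C * ∫ t in Ioi a, ‖v t‖ := by
  have hu_Ioi := fun t (ht : t ∈ Ioi a) ↦ hu t (Ioi_subset_Ici_self ht)
  have hC_Ioi := fun t (ht : t ∈ Ioi a) ↦ hC t (Ioi_subset_Ici_self ht)
  have tendsto_left : Tendsto (u * v) (𝓝[>] a) (𝓝 (u a * v a)) :=
    ((hu a self_mem_Ici).mul (hv a self_mem_Ici)).continuousAt.continuousWithinAt
  have by_parts : ∫ t in Ioi a, u t * v' t = 0 - u a * v a - ∫ t in Ioi a, u' t * v t :=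
    integral_Ioi_mul_deriv_eq_deriv_mul hu_Ioi
      (fun t ht ↦ hv t (Ioi_subset_Ici_self ht)) huv'
      (integrableOn_deriv_mul_of_norm_le hu_Ioi hC_Ioi hv_int) tendsto_left
      (tendsto_mul_atTop_zero_of_integrableOn hu hC hv hv_int huv')
  have remaining_integral_le : ‖∫ t in Ioi a, u' t * v t‖ ≤ C * ∫ t in Ioi a, ‖v t‖ := by
    rw [← integral_const_mul]
    refine norm_integral_le_of_norm_le (hv_int.norm.const_mul C) ?_
    filter_upwards [ae_restrict_mem measurableSet_Ioi] with t ht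
    exact norm_mul_le_of_le (hC_Ioi t ht) le_rfl
  calc ‖∫ t in Ioi a, u t * v' t‖
      ≤ ‖u a * v a‖ + ‖∫ t in Ioi a, u' t * v t‖ := by
        rw [by_parts, zero_sub]
        exact (norm_sub_le _ _).trans_eq (by rw [norm_neg])
    _ ≤ ‖u a‖ * ‖v a‖ + C * ∫ t in Ioi a, ‖v t‖ :=
        add_le_add (norm_mul_le _ _) remaining_integral_le

end IntegrationByParts

section FirstOrderRemainder

/-- The first-order Taylor remainder `δ_l φ(x)` of `φ` at `x` with increment `l`. The increment is
the last argument, so that `firstOrderRemainder φ x` is the function to be differentiated. -/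
noncomputable def firstOrderRemainder (φ : ℝ → ℝ) (x l : ℝ) : ℝ :=
  φ (x + l) - φ x - deriv φ x * l

variable {φ : ℝ → ℝ} {K : ℝ}

theorem hasDerivAt_firstOrderRemainder (x : ℝ) {l : ℝ} (hφ : DifferentiableAt ℝ φ (x + l)) :
    HasDerivAt (firstOrderRemainder φ x) (deriv φ (x + l) - deriv φ x) l :=
  ((hφ.hasDerivAt.comp_const_add x l).sub_const (φ x)).sub (hasDerivAt_const_mul (deriv φ x))

theorem abs_deriv_sub_deriv_le (hK : ∀ y, |deriv φ y| ≤ K) (x y : ℝ) :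
    |deriv φ x - deriv φ y| ≤ 2 * K := by
  linarith [abs_sub (deriv φ x) (deriv φ y), hK x, hK y]

theorem abs_firstOrderRemainder_le (hφ : Differentiable ℝ φ) (hK : ∀ y, |deriv φ y| ≤ K)
    (x l : ℝ) : |firstOrderRemainder φ x l| ≤ 2 * K * |l| := by
  have increment_le := convex_univ.norm_image_sub_le_of_norm_hasDerivWithin_le
    (fun t _ ↦ (hasDerivAt_firstOrderRemainder x (hφ (x + t))).hasDerivWithinAt)
    (fun t _ ↦ abs_deriv_sub_deriv_le hK (x + t) x) (mem_univ 0) (mem_univ l)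
  simpa [firstOrderRemainder] using increment_le

theorem abs_integral_firstOrderRemainder_mul_deriv_le (hφ : Differentiable ℝ φ)
    (hK : ∀ y, |deriv φ y| ≤ K) {v v' : ℝ → ℝ} {a : ℝ}
    (hv : ∀ l ∈ Ici a, HasDerivAt v (v' l) l) (hv_int : IntegrableOn v (Ioi a)) (x : ℝ)
    (hδ_int : IntegrableOn (fun l ↦ firstOrderRemainder φ x l * v' l) (Ioi a)) :
    |∫ l in Ioi a, firstOrderRemainder φ x l * v' l| ≤
      2 * K * (|a * v a| + ∫ l in Ioi a, |v l|) := by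
  calc |∫ l in Ioi a, firstOrderRemainder φ x l * v' l|
      ≤ |firstOrderRemainder φ x a| * |v a| + 2 * K * ∫ l in Ioi a, |v l| :=
        norm_integral_Ioi_mul_deriv_le
          (fun l _ ↦ hasDerivAt_firstOrderRemainder x (hφ (x + l)))
          (fun l _ ↦ abs_deriv_sub_deriv_le hK (x + l) x) hv hv_int hδ_int
    _ ≤ 2 * K * |a| * |v a| + 2 * K * ∫ l in Ioi a, |v l| := by
        gcongr
        exact abs_firstOrderRemainder_le hφ hK x a
    _ = 2 * K * (|a * v a| + ∫ l in Ioi a, |v l|) := by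
        rw [abs_mul]
        ring

end FirstOrderRemainder

theorem hasDerivAt_neg_comp_mul_rpow {β : ℝ → ℝ} {b c l : ℝ} (α : ℝ)
    (hβ : HasDerivAt β b (c * l)) (hl : l ≠ 0) :
    HasDerivAt (fun t ↦ -(β (c * t) * t ^ (-α)))
      ((α * β (c * l) - b * c * l) * l ^ (-α - 1)) l := by
  have scaled : HasDerivAt (fun t ↦ β (c * t)) (b * c) l := hβ.comp l (hasDerivAt_const_mul c)
  have power : HasDerivAt (fun t : ℝ ↦ t ^ (-α)) (-α * l ^ (-α - 1)) l :=
    Real.hasDerivAt_rpow_const (.inl hl)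
  have rpow_split : l ^ (-α) = l * l ^ (-α - 1) := by
    rw [Real.rpow_sub_one hl, mul_div_cancel₀ _ hl]
  refine (scaled.mul power).neg.congr_deriv ?_
  rw [rpow_split]
  ring

theorem stmt_8_general (α : ℝ) {c : ℝ} (hc : 0 < c) {φ : ℝ → ℝ} (hφ : Differentiable ℝ φ)
    (hφ'b : ∃ M, ∀ y, |deriv φ y| ≤ M) {β β' : ℝ → ℝ}
    (hβ : ∀ y > 0, HasDerivAt β (β' y) y)
    (hβ_int : IntegrableOn (fun l ↦ |β (c * l)| * l ^ (-α)) (Ioi 1)) (x : ℝ)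
    (hδ_int : IntegrableOn (fun l ↦ (φ (x + l) - φ x - deriv φ x * l) *
      (α * β (c * l) - β' (c * l) * c * l) * l ^ (-α - 1)) (Ioi 1)) :
    |∫ l in Ioi (1 : ℝ), (φ (x + l) - φ x - deriv φ x * l) *
        (α * β (c * l) - β' (c * l) * c * l) * l ^ (-α - 1)| ≤
      2 * (⨆ y, |deriv φ y|) * (|β c| + ∫ l in Ioi (1 : ℝ), |β (c * l)| * l ^ (-α)) := by
  set v : ℝ → ℝ := fun l ↦ -(β (c * l) * l ^ (-α)) with v_def
  have hK : ∀ y, |deriv φ y| ≤ ⨆ y, |deriv φ y| :=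
    le_ciSup (hφ'b.imp fun M hM ↦ forall_mem_range.2 hM)
  have hv : ∀ l ∈ Ici (1 : ℝ),
      HasDerivAt v ((α * β (c * l) - β' (c * l) * c * l) * l ^ (-α - 1)) l := fun l hl ↦
    have l_pos : 0 < l := one_pos.trans_le hl
    hasDerivAt_neg_comp_mul_rpow α (hβ _ (mul_pos hc l_pos)) l_pos.ne'
  have abs_v : EqOn (fun l ↦ |v l|) (fun l ↦ |β (c * l)| * l ^ (-α)) (Ioi 1) := fun l hl ↦ by
    simp [v_def, abs_mul, abs_of_pos (Real.rpow_pos_of_pos (one_pos.trans hl) (-α))]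
  have v_cont : ContinuousOn v (Ioi 1) := fun l hl ↦
    (hv l (Ioi_subset_Ici_self hl)).continuousAt.continuousWithinAt
  have v_int : IntegrableOn v (Ioi 1) :=
    (integrable_norm_iff (v_cont.aestronglyMeasurable measurableSet_Ioi)).1
      (hβ_int.congr_fun abs_v.symm measurableSet_Ioi)
  have abs_v_one : |1 * v 1| = |β c| := by simp [v_def]
  rw [← setIntegral_congr_fun measurableSet_Ioi abs_v, ← abs_v_one]
  simp only [mul_assoc _ _ (_ ^ (-α - 1))] at hδ_int ⊢
  exact abs_integral_firstOrderRemainder_mul_deriv_le hφ hK hv v_int x hδ_int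

/-- Estimate of the tail integral `I₁` in the case `α ∈ (1,2)`. -/
theorem stmt_8 (α s : ℝ) (hα : α ∈ Set.Ioo (1:ℝ) 2) (hs : s ∈ Set.Ioc (0:ℝ) 1)
    (φ : ℝ → ℝ) (hφ : ContDiff ℝ 1 φ)
    (hφb : ∃ M, ∀ x, |φ x| ≤ M) (hφ'b : ∃ M, ∀ x, |deriv φ x| ≤ M)
    (β β' : ℝ → ℝ)
    (hβd : ∀ y > (0:ℝ), HasDerivAt β (β' y) y)
    (hβ'c : ContinuousOn β' (Set.Ioi 0))
    (hβb : ∃ M, ∀ y > (0:ℝ), |β y| ≤ M)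
    (hβlim : Tendsto β atTop (nhds 0))
    (hint1 : IntegrableOn
      (fun l => |β (s ^ (-(1/α)) * l)| * l ^ (-α)) (Set.Ioi 1))
    (hint2 : ∀ x : ℝ, IntegrableOn
      (fun l => (φ (x + l) - φ x - deriv φ x * l) *
        (α * β (s ^ (-(1/α)) * l) - β' (s ^ (-(1/α)) * l) * s ^ (-(1/α)) * l) *
        l ^ (-α - 1)) (Set.Ioi 1)) :
    ∀ x : ℝ,
      |∫ l in Set.Ioi (1:ℝ),
          (φ (x + l) - φ x - deriv φ x * l) *
            (α * β (s ^ (-(1/α)) * l) - β' (s ^ (-(1/α)) * l) * s ^ (-(1/α)) * l) *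
            l ^ (-α - 1)| ≤
        2 * (⨆ y, |deriv φ y|) *
          (|β (s ^ (-(1/α)))| +
            ∫ l in Set.Ioi (1:ℝ), |β (s ^ (-(1/α)) * l)| * l ^ (-α)) := by
  intro x
  exact stmt_8_general α (Real.rpow_pos_of_pos hs.1 _) (hφ.differentiable one_ne_zero) hφ'b hβd
    hint1 x (hint2 x)
end
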